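/- arXiv:2105.12630 — 5 statements merged into one kernel-verified Lean document; each statement's English description precedes it below -/
import Mathlib

section
/- Let d ≥ 2 and let T be a d-regular tree. Let G be a Hausdorff topological group with a faithful, vertex-transitive action on T by graph automorphisms such that: (a) every graph automorphism of T is induced by an element of G; (b) the stabilizer in G of each vertex of T is a compact open subgroup of G; and (c) the pointwise stabilizers in G of finite sets of vertices of T form a neighbourhood basis of the identity of G (these conditions characterize Aut(T) with the permutation topology). Then every Cayley–Abels graph for G has degree at least d; consequently T is itself a Cayley–Abels graph of minimal degree for G and md(Aut(T_d)) = d. -/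
/-- A Cayley–Abels graph for a topological group `G`: a connected, locally finite simple
graph together with a vertex-transitive action of `G` by graph automorphisms (given by a
homomorphism `ρ` into the permutations of the vertex set, preserving adjacency) such that
the stabilizer of every vertex is a compact open subgroup of `G`. -/
def IsCayleyAbels {G V : Type*} [Group G] [TopologicalSpace G]
    (Γ : SimpleGraph V) (ρ : G →* Equiv.Perm V) : Prop :=
  Γ.Connected ∧ (∀ v : V, (Γ.neighborSet v).Finite) ∧
    (∀ (g : G) (u v : V), Γ.Adj u v → Γ.Adj (ρ g u) (ρ g v)) ∧
    (∀ u v : V, ∃ g : G, ρ g u = v) ∧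
    (∀ v : V, IsCompact {g : G | ρ g v = v} ∧ IsOpen {g : G | ρ g v = v})

universe u

/-!
Put `k = d - 1` and suppose that the degree of a Cayley–Abels graph `Δ` is at most `k`.
If `k = 1`, then `Δ` is finite and `G` would be compact; let `k ≥ 2`.

The stabilizer of an edge `uv` of `Δ` moves each neighbour of `v` in an orbit of at most `k - 1`
points. A subgroup of `G` that fixes an edge and has no proper subgroup of index at most `k - 1`
therefore also fixes the adjacent edges, and so acts trivially on `Δ`; such elements displace the
vertices of `T` by a bounded amount. On the other hand `Sym(k)`, permuting the branches below a
vertex deep in `T`, fixes an edge of `Δ`, and its nontrivial elements have unbounded displacement.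
This is a contradiction if `Sym(k)` has a nontrivial subgroup without proper subgroups of index at
most `k - 1`: the group `Sym(2)`, `C₃` or, for `k ≥ 5`, the alternating group.

For `k = 4` there is no such subgroup, but `C₃` still works once the orbits on neighbours are shown
to have at most `k - 2` points. Otherwise `G` is generated by a vertex stabilizer `U` of `Δ` and at
most two elements moving the vertex to a neighbour. A hyperbolic `g` satisfies
`|U : U ∩ g U g⁻¹| ≥ k` for every compact open `U`, because `|U : U ∩ gⁿ U g⁻ⁿ|` grows at least
like `kⁿ`. Hence these generators and their products with `U` are not hyperbolic, and by Serre's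
lemma `G` has bounded orbits on `T`, which is absurd.
-/

section TreeMetric

variable {V : Type*} {T : SimpleGraph V}

theorem exists_adj_dist_add_one_eq (hT : T.Connected) {o v : V} (hv : v ≠ o) :
    ∃ a, T.Adj v a ∧ T.dist o a + 1 = T.dist o v := by
  obtain ⟨p, -, hp⟩ := hT.exists_path_of_dist v o
  cases p with
  | nil => exact absurd rfl hv
  | @cons _ a _ hva q =>
    refine ⟨a, hva, ?_⟩
    have hq := SimpleGraph.dist_le q
    have htri := hT.dist_triangle (u := v) (v := a) (w := o)
    rw [SimpleGraph.dist_eq_one_iff_adj.2 hva] at htri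
    rw [SimpleGraph.Walk.length_cons] at hp
    rw [SimpleGraph.dist_comm (u := o), SimpleGraph.dist_comm (u := o)]
    omega

theorem finite_of_ncard_neighborSet_le_one (hT : T.Connected)
    (hfin : ∀ v, (T.neighborSet v).Finite) (hdeg : ∀ v, (T.neighborSet v).ncard ≤ 1) :
    Finite V := by
  obtain ⟨o⟩ := hT.nonempty
  refine Set.finite_univ_iff.1 <| ((hfin o).insert o).subset fun w _ => ?_
  refine or_iff_not_imp_left.2 fun hwo => ?_
  obtain ⟨p, hwp, hop⟩ := exists_adj_dist_add_one_eq hT hwo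
  obtain rfl | hpo := eq_or_ne p o
  · exact hwp.symm
  · obtain ⟨q, hpq, hoq⟩ := exists_adj_dist_add_one_eq hT hpo
    have hqw : q = w := (Set.ncard_le_one (hfin p)).1 (hdeg p) q hpq w hwp.symm
    subst hqw
    omega

theorem eq_of_adj_of_dist_add_one_eq (hT : T.IsTree) {o v a b : V} (ha : T.Adj v a)
    (hb : T.Adj v b) (hoa : T.dist o a + 1 = T.dist o v) (hob : T.dist o b + 1 = T.dist o v) :
    a = b := by
  obtain ⟨p, -, hp⟩ := hT.connected.exists_path_of_dist o a
  obtain ⟨q, -, hq⟩ := hT.connected.exists_path_of_dist o b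
  have hpath_a : (p.concat ha.symm).IsPath :=
    SimpleGraph.Walk.isPath_of_length_eq_dist _ (by simp [hp, hoa])
  have hpath_b : (q.concat hb.symm).IsPath :=
    SimpleGraph.Walk.isPath_of_length_eq_dist _ (by simp [hq, hob])
  have heq := (hT.existsUnique_path o v).unique hpath_a hpath_b
  simpa using congrArg SimpleGraph.Walk.penultimate heq

theorem dist_eq_add_or_exists_adj_closer (hT : T.IsTree) (q p r : V) :
    T.dist q r = T.dist q p + T.dist p r ∨
      ∃ a, T.Adj p a ∧ T.dist q a + 1 = T.dist q p ∧ T.dist r a + 1 = T.dist r p := by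
  induction hn : T.dist p r generalizing p with
  | zero =>
    obtain rfl := hT.connected.dist_eq_zero_iff.1 hn
    exact .inl rfl
  | succ n ih =>
    have hpr : p ≠ r := by
      rintro rfl
      simp at hn
    obtain ⟨b, hpb, hrb⟩ := exists_adj_dist_add_one_eq hT.connected hpr
    rcases hT.dist_eq_dist_add_one_of_adj q hpb with hqb | hqb
    · exact .inr ⟨b, hpb, hqb.symm, hrb⟩
    rw [SimpleGraph.dist_comm] at hn
    rcases ih b (by rw [SimpleGraph.dist_comm]; omega) with hadd | ⟨c, hbc, hqc, hrc⟩
    · left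
      omega
    · obtain rfl := eq_of_adj_of_dist_add_one_eq hT hpb.symm hbc hqb.symm hqc
      omega

theorem dist_add_dist_le_max (hT : T.IsTree) (p q r s : V) :
    T.dist p s + T.dist q r ≤ max (T.dist p q + T.dist r s) (T.dist p r + T.dist q s) := by
  induction hn : T.dist s p generalizing p with
  | zero =>
    obtain rfl := hT.connected.dist_eq_zero_iff.1 hn
    rw [SimpleGraph.dist_self, SimpleGraph.dist_comm (u := s), SimpleGraph.dist_comm (u := s)]
    have := hT.connected.dist_triangle (u := q) (v := s) (w := r)
    rw [SimpleGraph.dist_comm (u := s)] at this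
    omega
  | succ n ih =>
    have hqr := hT.connected.dist_triangle (u := q) (v := p) (w := r)
    have hps := SimpleGraph.dist_comm (G := T) (u := p) (v := s)
    have hpq := SimpleGraph.dist_comm (G := T) (u := p) (v := q)
    have hpr := SimpleGraph.dist_comm (G := T) (u := p) (v := r)
    rcases dist_eq_add_or_exists_adj_closer hT q p s with hqs | ⟨a, hpa, hqa, hsa⟩
    · omega
    rcases dist_eq_add_or_exists_adj_closer hT r p s with hrs | ⟨b, hpb, hrb, hsb⟩
    · omega
    obtain rfl := eq_of_adj_of_dist_add_one_eq hT hpa hpb hsa hsb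
    have hfour := ih a (by omega)
    rw [SimpleGraph.dist_comm (u := a), SimpleGraph.dist_comm (u := a),
      SimpleGraph.dist_comm (u := a)] at hfour
    omega

end TreeMetric

/-! ### Groups acting on 0-hyperbolic spaces -/

/-- Gromov's four-point condition with constant `0`, the metric property of trees on which
Serre's lemma rests. Separation of points is not required. -/
structure IsZeroHyperbolic {V : Type*} (D : V → V → ℕ) : Prop where
  self_eq_zero (x : V) : D x x = 0
  comm (x y : V) : D x y = D y x
  four_point (p q r s : V) : D p s + D q r ≤ max (D p q + D r s) (D p r + D q s)

theorem isZeroHyperbolic_dist {V : Type*} {T : SimpleGraph V} (hT : T.IsTree) :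
    IsZeroHyperbolic T.dist where
  self_eq_zero _ := SimpleGraph.dist_self
  comm _ _ := SimpleGraph.dist_comm
  four_point := dist_add_dist_le_max hT

/-- `g` acts as a hyperbolic isometry (a translation along an axis), witnessed by one point that
`g ^ 2` moves further than `g` does. -/
def IsHyperbolic {V G : Type*} [Group G] [MulAction G V] (D : V → V → ℕ) (g : G) : Prop :=
  ∃ x : V, D x (g • x) < D x (g • g • x)

/-- The `H`-orbit of `x` is bounded. -/
def HasBoundedOrbit {V G : Type*} [Group G] [MulAction G V] (D : V → V → ℕ) (H : Subgroup G)
    (x : V) : Prop :=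
  ∃ M, ∀ h ∈ H, D x (h • x) ≤ M

theorem IsHyperbolic.mul_comm {V G : Type*} [Group G] [MulAction G V] {D : V → V → ℕ} {a b : G}
    (h : IsHyperbolic D (a * b)) (hinv : ∀ (g : G) (y z : V), D (g • y) (g • z) = D y z) :
    IsHyperbolic D (b * a) := by
  obtain ⟨x, hx⟩ := h
  refine ⟨b • x, ?_⟩
  simpa only [mul_smul, hinv b] using hx

namespace IsZeroHyperbolic

variable {V G : Type*} [Group G] [MulAction G V] {D : V → V → ℕ} {x : V} {g a b : G}

theorem triangle (hD : IsZeroHyperbolic D) (x y z : V) : D x z ≤ D x y + D y z := by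
  have := hD.four_point x y y z
  rw [hD.self_eq_zero] at this
  omega

theorem dist_inv_smul (hD : IsZeroHyperbolic D)
    (hinv : ∀ (g : G) (y z : V), D (g • y) (g • z) = D y z) (g : G) (x : V) :
    D x (g⁻¹ • x) = D x (g • x) := by
  rw [← hinv g, smul_inv_smul, hD.comm]

theorem isHyperbolic_inv (hD : IsZeroHyperbolic D)
    (hinv : ∀ (g : G) (y z : V), D (g • y) (g • z) = D y z) :
    IsHyperbolic D g⁻¹ ↔ IsHyperbolic D g := by
  simp only [IsHyperbolic, ← mul_smul, ← mul_inv_rev, hD.dist_inv_smul hinv]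

theorem exists_le_dist_pow_smul (hD : IsZeroHyperbolic D)
    (hinv : ∀ (g : G) (y z : V), D (g • y) (g • z) = D y z) (hg : IsHyperbolic D g) :
    ∃ x, ∀ n : ℕ, n ≤ D x (g ^ n • x) := by
  obtain ⟨x, hx⟩ := hg
  refine ⟨x, ?_⟩
  have hinv_pow (m n : ℕ) : D (g ^ m • x) (g ^ (m + n) • x) = D x (g ^ n • x) := by
    rw [pow_add, mul_smul, hinv]
  have hgrow : ∀ n : ℕ, D x (g • x) + n + 1 ≤ D x (g ^ (n + 2) • x) ∧
      D x (g ^ (n + 1) • x) < D x (g ^ (n + 2) • x) := by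
    intro n
    induction n with
    | zero =>
      simp only [zero_add, pow_one, pow_two, mul_smul]
      omega
    | succ n ih =>
      have hfour := hD.four_point x (g ^ 1 • x) (g ^ (n + 2 + 1) • x) (g ^ (n + 2) • x)
      rw [hD.comm (g ^ (n + 2 + 1) • x), hinv_pow, add_comm (n + 2), hinv_pow,
        show n + 2 = 1 + (n + 1) by omega, hinv_pow, pow_one] at hfour
      grind
  have hpos : 1 ≤ D x (g • x) := by
    have := hD.triangle x (g • x) (g • g • x)
    rw [hinv] at this
    omega
  rintro (_ | _ | n)
  · exact Nat.zero_le _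
  · simpa using hpos
  · have hstep : D x (g • x) + n + 1 ≤ D x (g ^ (n + 2) • x) := (hgrow n).1
    exact le_trans (by omega) hstep

theorem not_isHyperbolic_of_mem (hD : IsZeroHyperbolic D)
    (hinv : ∀ (g : G) (y z : V), D (g • y) (g • z) = D y z) {H : Subgroup G}
    (hH : HasBoundedOrbit D H x) (hg : g ∈ H) : ¬IsHyperbolic D g := by
  intro hyp
  obtain ⟨M, hM⟩ := hH
  obtain ⟨y, hy⟩ := hD.exists_le_dist_pow_smul hinv hyp
  have hgrow := hy (M + 2 * D x y + 1)
  set h := g ^ (M + 2 * D x y + 1)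
  have hbound := hM h (pow_mem hg _)
  have := hD.triangle y x (h • y)
  have := hD.triangle x (h • x) (h • y)
  rw [hinv] at this
  have := hD.comm y x
  omega

theorem dist_smul_inv_smul_le (hD : IsZeroHyperbolic D)
    (hinv : ∀ (g : G) (y z : V), D (g • y) (g • z) = D y z) (hg : ¬IsHyperbolic D g) (x : V) :
    D (g • x) (g⁻¹ • x) ≤ D x (g • x) := by
  rw [hD.comm, ← hinv g, smul_inv_smul]
  exact not_lt.1 fun hlt => hg ⟨x, hlt⟩

theorem dist_mul_smul_le_max (hD : IsZeroHyperbolic D)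
    (hinv : ∀ (g : G) (y z : V), D (g • y) (g • z) = D y z) (ha : ¬IsHyperbolic D a)
    (hb : ¬IsHyperbolic D b) (hab : ¬IsHyperbolic D (a * b)) (x : V) :
    D x ((a * b) • x) ≤ max (D x (a • x)) (D x (b • x)) := by
  have ha' := hD.dist_smul_inv_smul_le hinv ha x
  have hb' := hD.dist_smul_inv_smul_le hinv hb x
  have hab' := hD.dist_smul_inv_smul_le hinv hab x
  have hxa := hD.dist_inv_smul hinv a x
  have hxb := hD.dist_inv_smul hinv b x
  have hxab := hD.dist_inv_smul hinv (a * b) x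
  have hbase : D (a⁻¹ • x) (b • x) = D x ((a * b) • x) := by
    rw [← hinv a, smul_inv_smul, mul_smul]
  have hleft : D (a • x) ((a * b) • x) = D x (b • x) := by
    rw [mul_smul, hinv]
  have hright : D ((a * b)⁻¹ • x) (b⁻¹ • x) = D x (a • x) := by
    rw [mul_inv_rev, mul_smul, hinv, hD.comm, hD.dist_inv_smul hinv]
  have hfour₁ := hD.four_point x (a⁻¹ • x) (b • x) (a • x)
  have hfour₂ := hD.four_point x (a • x) (b • x) (b⁻¹ • x)
  have hfour₃ := hD.four_point x (a • x) (b⁻¹ • x) ((a * b) • x)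
  have hfour₄ := hD.four_point x (b⁻¹ • x) ((a * b) • x) ((a * b)⁻¹ • x)
  rw [hD.comm (a⁻¹ • x) (a • x)] at hfour₁
  rw [hD.comm (b • x) (a • x)] at hfour₁
  rw [hD.comm (b⁻¹ • x) ((a * b)⁻¹ • x)] at hfour₄
  omega

theorem max_dist_smul_le (hD : IsZeroHyperbolic D)
    (hinv : ∀ (g : G) (y z : V), D (g • y) (g • z) = D y z) {y : V}
    (hxx : D x (g⁻¹ • x) ≤ D x y) (hxy : D x (g⁻¹ • y) ≤ D x y) (hyx : D y (g⁻¹ • x) ≤ D x y)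
    (hyy : D y (g⁻¹ • y) ≤ D x y) (z : V) :
    max (D x (g • z)) (D y (g • z)) ≤ max (D x z) (D y z) := by
  have hmove (u : V) : D u (g • z) = D (g⁻¹ • u) z := by
    rw [← hinv g (g⁻¹ • u), smul_inv_smul]
  rw [hmove, hmove]
  have hfour₁ := hD.four_point (g⁻¹ • x) x y z
  have hfour₂ := hD.four_point (g⁻¹ • y) x y z
  simp only [hD.comm (g⁻¹ • _) x, hD.comm (g⁻¹ • _) y] at hfour₁ hfour₂
  omega

theorem max_dist_smul_le_of_mem_closure (hD : IsZeroHyperbolic D)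
    (hinv : ∀ (g : G) (y z : V), D (g • y) (g • z) = D y z) {S : Set G} {y : V}
    (hS : ∀ s ∈ S, s⁻¹ ∈ S) (hxx : ∀ s ∈ S, D x (s • x) ≤ D x y)
    (hxy : ∀ s ∈ S, D x (s • y) ≤ D x y) (hyy : ∀ s ∈ S, D y (s • y) ≤ D x y)
    (hg : g ∈ Subgroup.closure S) (z : V) :
    max (D x (g • z)) (D y (g • z)) ≤ max (D x z) (D y z) := by
  have hgen (s : G) (hs : s ∈ S) (z : V) :
      max (D x (s • z)) (D y (s • z)) ≤ max (D x z) (D y z) := by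
    refine hD.max_dist_smul_le hinv (hxx _ (hS s hs)) (hxy _ (hS s hs)) ?_ (hyy _ (hS s hs)) z
    rw [← hinv s, smul_inv_smul, hD.comm]
    exact hxy s hs
  induction hg using Subgroup.closure_induction'' generalizing z with
  | mem s hs => exact hgen s hs z
  | inv_mem s hs => exact hgen _ (hS s hs) z
  | one => simp
  | mul g h _ _ ihg ihh =>
    rw [mul_smul]
    exact (ihg _).trans (ihh _)

/-- Serre's lemma. The generator `a₀` moving `x` furthest provides the segment `[x, a₀ • x]`, which
no generator can push away from itself. -/
theorem dist_smul_le_of_mem_closure (hD : IsZeroHyperbolic D)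
    (hinv : ∀ (g : G) (y z : V), D (g • y) (g • z) = D y z) {S : Set G} {a₀ : G}
    (hS : ∀ s ∈ S, s⁻¹ ∈ S) (hgen : ∀ s ∈ S, ¬IsHyperbolic D s)
    (hmul : ∀ s ∈ S, ∀ t ∈ S, s = t ∨ ¬IsHyperbolic D (s * t)) (ha₀ : a₀ ∈ S)
    (hmax : ∀ s ∈ S, D x (s • x) ≤ D x (a₀ • x)) (hg : g ∈ Subgroup.closure S) :
    D x (g • x) ≤ D x (a₀ • x) := by
  have hprod (s : G) (hs : s ∈ S) (t : G) (ht : t ∈ S) :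
      D x ((s * t) • x) ≤ D x (a₀ • x) := by
    rcases hmul s hs t ht with rfl | hst
    · rw [mul_smul]
      exact (not_lt.1 fun hlt => hgen s hs ⟨x, hlt⟩).trans (hmax s hs)
    · exact (hD.dist_mul_smul_le_max hinv (hgen s hs) (hgen t ht) hst x).trans
        (max_le (hmax s hs) (hmax t ht))
  have hconj (s : G) (hs : s ∈ S) : D (a₀ • x) (s • a₀ • x) ≤ D x (a₀ • x) := by
    rw [← hinv a₀⁻¹, inv_smul_smul, ← mul_smul, ← mul_smul]
    rcases hmul _ (hS _ ha₀) s hs with rfl | hst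
    · simpa using hmax _ hs
    · have hs' : ¬IsHyperbolic D (a₀⁻¹ * s * a₀) := fun h =>
        hgen s hs (by simpa using h.mul_comm hinv)
      exact (hD.dist_mul_smul_le_max hinv hst (hgen _ ha₀) hs' x).trans
        (max_le (hprod _ (hS _ ha₀) s hs) le_rfl)
  have hxy (s : G) (hs : s ∈ S) : D x (s • a₀ • x) ≤ D x (a₀ • x) := by
    rw [← mul_smul]
    exact hprod s hs a₀ ha₀
  have hkey := hD.max_dist_smul_le_of_mem_closure hinv hS hmax hxy hconj hg x
  rw [hD.self_eq_zero, hD.comm (a₀ • x) x] at hkey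
  omega

theorem hasBoundedOrbit_closure_insert (hD : IsZeroHyperbolic D)
    (hinv : ∀ (g : G) (y z : V), D (g • y) (g • z) = D y z) {H : Subgroup G}
    (hH : HasBoundedOrbit D H x) (ha : ∀ h ∈ H, ¬IsHyperbolic D (h * a)) :
    HasBoundedOrbit D (Subgroup.closure (insert a (H : Set G))) x := by
  have ha₁ : ¬IsHyperbolic D a := by simpa using ha 1 H.one_mem
  have ha' : ∀ h ∈ H, ¬IsHyperbolic D (a * h) := fun h hh hyp =>
    ha h hh (hyp.mul_comm hinv)
  have hinv_mul : ∀ h ∈ H, ¬IsHyperbolic D (a⁻¹ * h) := fun h hh hyp =>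
    ha h⁻¹ (H.inv_mem hh) (by rwa [← hD.isHyperbolic_inv hinv, mul_inv_rev, inv_inv])
  have hmul_inv : ∀ h ∈ H, ¬IsHyperbolic D (h * a⁻¹) := fun h hh hyp =>
    hinv_mul h hh (hyp.mul_comm hinv)
  have hHnot : ∀ h ∈ H, ¬IsHyperbolic D h := fun h hh => hD.not_isHyperbolic_of_mem hinv hH hh
  set S : Set G := insert a (insert a⁻¹ (H : Set G))
  obtain ⟨a₀, ha₀, hmax⟩ : ∃ a₀ ∈ S, ∀ s ∈ S, D x (s • x) ≤ D x (a₀ • x) := by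
    obtain ⟨M, hM⟩ := hH
    have hbdd : BddAbove ((fun s : G => D x (s • x)) '' S) := by
      simp only [S, Set.image_insert_eq, bddAbove_insert]
      exact ⟨M, Set.forall_mem_image.2 hM⟩
    obtain ⟨a₀, ha₀, heq⟩ := Nat.sSup_mem (Set.Nonempty.image _ ⟨a, .inl rfl⟩) hbdd
    exact ⟨a₀, ha₀, fun s hs => (le_csSup hbdd ⟨s, hs, rfl⟩).trans heq.ge⟩
  refine ⟨D x (a₀ • x), fun g hg => hD.dist_smul_le_of_mem_closure hinv (S := S) ?_ ?_ ?_ ha₀ hmax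
    (Subgroup.closure_mono (Set.insert_subset_insert (Set.subset_insert _ _)) hg)⟩
  · rintro s (rfl | rfl | hs)
    exacts [.inr (.inl rfl), .inl (inv_inv a), .inr (.inr (H.inv_mem hs))]
  · rintro s (rfl | rfl | hs)
    exacts [ha₁, (hD.isHyperbolic_inv hinv).not.2 ha₁, hHnot s hs]
  · have hone : ¬IsHyperbolic D (1 : G) := hHnot 1 H.one_mem
    rintro s (rfl | rfl | hs) t (rfl | rfl | ht)
    exacts [.inl rfl, .inr (by rwa [mul_inv_cancel]), .inr (ha' t ht),
      .inr (by rwa [inv_mul_cancel]), .inl rfl, .inr (hinv_mul t ht),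
      .inr (ha s hs), .inr (hmul_inv s hs), .inr (hHnot _ (H.mul_mem hs ht))]

end IsZeroHyperbolic

/-! ### Relative indices of compact open subgroups -/

section RelIndex

open scoped Pointwise

variable {G : Type*} [Group G]

theorem relIndex_stabilizer_eq_ncard {X : Type*} [MulAction G X] (H : Subgroup G) (x : X) :
    (MulAction.stabilizer G x).relIndex H = (MulAction.orbit H x).ncard :=
  MulAction.index_stabilizer H x

theorem relIndex_le_relIndex_mul_relIndex {H K L : Subgroup G} (hHK : H.relIndex K ≠ 0)
    (hKL : K.relIndex L ≠ 0) : H.relIndex L ≤ H.relIndex K * K.relIndex L := by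
  have hHKL : H.relIndex (K ⊓ L) ≤ H.relIndex K :=
    Subgroup.relIndex_le_of_le_right inf_le_left hHK
  have hHKL₀ : H.relIndex (K ⊓ L) ≠ 0 := mt (Subgroup.relIndex_eq_zero_of_le_right inf_le_left) hHK
  calc
    H.relIndex L ≤ (H ⊓ K).relIndex L :=
      Subgroup.relIndex_le_of_le_left inf_le_left
        (by rw [← Subgroup.relIndex_inf_mul_relIndex]; exact mul_ne_zero hHKL₀ hKL)
    _ = H.relIndex (K ⊓ L) * K.relIndex L := (Subgroup.relIndex_inf_mul_relIndex ..).symm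
    _ ≤ H.relIndex K * K.relIndex L := Nat.mul_le_mul_right _ hHKL

theorem relIndex_conj_mul_le (U : Subgroup G) {g h : G}
    (hg : (MulAut.conj g • U).relIndex U ≠ 0) (hh : (MulAut.conj h • U).relIndex U ≠ 0) :
    (MulAut.conj (g * h) • U).relIndex U ≤
      (MulAut.conj h • U).relIndex U * (MulAut.conj g • U).relIndex U := by
  have hgh : (MulAut.conj (g * h) • U).relIndex (MulAut.conj g • U) =
      (MulAut.conj h • U).relIndex U := by
    rw [map_mul, mul_smul, Subgroup.relIndex_pointwise_smul]
  rw [← hgh] at hh ⊢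
  exact relIndex_le_relIndex_mul_relIndex hh hg

theorem relIndex_conj_pow_le (U : Subgroup G) (g : G)
    (hU : ∀ g : G, (MulAut.conj g • U).relIndex U ≠ 0) (n : ℕ) :
    (MulAut.conj (g ^ n) • U).relIndex U ≤ (MulAut.conj g • U).relIndex U ^ n := by
  induction n with
  | zero => simp
  | succ n ih =>
    rw [pow_succ g, pow_succ']
    exact (relIndex_conj_mul_le U (hU _) (hU _)).trans (Nat.mul_le_mul_left _ ih)

theorem relIndex_conj_le_mul {U X : Subgroup G} {g : G} (hXU : X.relIndex U ≠ 0)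
    (hUX : U.relIndex X ≠ 0) (hU : (MulAut.conj g • U).relIndex U ≠ 0) :
    (MulAut.conj g • X).relIndex X ≤
      X.relIndex U * ((MulAut.conj g • U).relIndex U * U.relIndex X) := by
  rw [← Subgroup.relIndex_pointwise_smul (MulAut.conj g) X U] at hXU ⊢
  refine (relIndex_le_relIndex_mul_relIndex hXU (Subgroup.relIndex_ne_zero_trans hU hUX)).trans ?_
  exact Nat.mul_le_mul_left _ (relIndex_le_relIndex_mul_relIndex hU hUX)

theorem conj_smul_stabilizer {X : Type*} [MulAction G X] (g : G) (x : X) :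
    MulAut.conj g • MulAction.stabilizer G x = MulAction.stabilizer G (g • x) :=
  (MulAction.stabilizer_smul_eq_stabilizer_map_conj g x).symm

theorem conj_smul_stabilizer_eq_of_swap {X : Type*} [MulAction G X] {g : G} {x : X}
    (hg : g • g • x = x) (hle : MulAction.stabilizer G x ≤ MulAction.stabilizer G (g • x)) :
    MulAut.conj g • MulAction.stabilizer G x = MulAction.stabilizer G x := by
  rw [conj_smul_stabilizer]
  refine le_antisymm ?_ hle
  simpa only [conj_smul_stabilizer, hg] using
    Subgroup.pointwise_smul_le_pointwise_smul_iff (a := MulAut.conj g) |>.2 hle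

theorem relIndex_ne_zero_of_isCompact_of_isOpen [TopologicalSpace G] [IsTopologicalGroup G]
    {H K : Subgroup G} (hH : IsCompact (H : Set G)) (hK : IsOpen (K : Set G)) :
    K.relIndex H ≠ 0 := by
  have : CompactSpace H := isCompact_iff_compactSpace.1 hH
  have : Finite (H ⧸ K.subgroupOf H) :=
    (K.subgroupOf H).quotient_finite_of_isOpen (hK.preimage continuous_subtype_val)
  exact Subgroup.index_ne_zero_of_finite

theorem isOpen_conj_smul [TopologicalSpace G] [IsTopologicalGroup G] {U : Subgroup G}
    (hU : IsOpen (U : Set G)) (g : G) : IsOpen ((MulAut.conj g • U : Subgroup G) : Set G) := by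
  have hpreimage : ((MulAut.conj g • U : Subgroup G) : Set G) =
      (fun h => g⁻¹ * h * g) ⁻¹' (U : Set G) := by
    ext h
    rw [SetLike.mem_coe, Subgroup.mem_pointwise_smul_iff_inv_smul_mem, ← map_inv]
    simp
  rw [hpreimage]
  exact hU.preimage (by fun_prop)

end RelIndex

/-- `P` has no proper subgroup of index at most `r`, phrased through all subgroups of the ambient
group so that it can be applied to stabilizers directly. -/
def HasNoSmallIndex {G : Type*} [Group G] (r : ℕ) (P : Subgroup G) : Prop :=
  ∀ K : Subgroup G, K.relIndex P ≠ 0 → K.relIndex P ≤ r → P ≤ K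

section HasNoSmallIndex

variable {G : Type*} [Group G] {r : ℕ} {P : Subgroup G}

theorem hasNoSmallIndex_one (P : Subgroup G) : HasNoSmallIndex 1 P := fun _ hne hle =>
  Subgroup.relIndex_eq_one.1 (by omega)

theorem hasNoSmallIndex_of_prime_card (hP : (Nat.card P).Prime) (hr : r < Nat.card P) :
    HasNoSmallIndex r P := fun K _ hle =>
  Subgroup.relIndex_eq_one.1 <| (hP.eq_one_or_self_of_dvd _ (K.relIndex_dvd_card P)).resolve_right
    (by omega)

theorem HasNoSmallIndex.map {H : Type*} [Group H] (hP : HasNoSmallIndex r P) (f : G →* H) :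
    HasNoSmallIndex r (P.map f) := by
  intro K hne hle
  rw [← Subgroup.relIndex_comap] at hne hle
  exact Subgroup.map_le_iff_le_comap.2 (hP _ hne hle)

/-- A proper subgroup of index `m ≤ r` would embed the simple group `A_k` into `S_m`, which has
fewer elements. -/
theorem hasNoSmallIndex_alternatingGroup {k : ℕ} (hk : 5 ≤ k) (hr : r < k) :
    HasNoSmallIndex r (alternatingGroup (Fin k)) := by
  intro K hne hle
  set H := K.subgroupOf (alternatingGroup (Fin k))
  change H.index ≠ 0 at hne
  change H.index ≤ r at hle
  rw [← Subgroup.subgroupOf_eq_top]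
  by_contra hH
  have : IsSimpleGroup (alternatingGroup (Fin k)) :=
    alternatingGroup.isSimpleGroup (by simpa using hk)
  have hcore : H.normalCore = ⊥ :=
    (Subgroup.Normal.eq_bot_or_eq_top inferInstance).resolve_right fun h =>
      hH (top_le_iff.1 (h ▸ H.normalCore_le))
  rw [Subgroup.normalCore_eq_ker, MonoidHom.ker_eq_bot_iff] at hcore
  have : Finite (alternatingGroup (Fin k) ⧸ H) := Nat.finite_of_card_ne_zero hne
  have : Nontrivial (Fin k) := Fin.nontrivial_iff_two_le.2 (by omega)
  have hcard : 2 * Nat.card (alternatingGroup (Fin k)) = k.factorial := by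
    rw [Nat.card_eq_fintype_card, two_mul_card_alternatingGroup, Fintype.card_perm,
      Fintype.card_fin]
  have hfac : k.factorial ≤ 2 * (k - 1).factorial :=
    calc
      k.factorial = 2 * Nat.card (alternatingGroup (Fin k)) := hcard.symm
      _ ≤ 2 * H.index.factorial :=
        Nat.mul_le_mul_left 2 ((Nat.card_le_card_of_injective _ hcore).trans Nat.card_perm.le)
      _ ≤ 2 * (k - 1).factorial := Nat.mul_le_mul_left 2 (Nat.factorial_le (by omega))
  rw [← Nat.mul_factorial_pred (by omega : k ≠ 0)] at hfac
  have := Nat.le_of_mul_le_mul_right hfac (Nat.factorial_pos _)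
  omega

theorem exists_ne_bot_hasNoSmallIndex_two {k : ℕ} (hk : 3 ≤ k) :
    ∃ P : Subgroup (Equiv.Perm (Fin k)), P ≠ ⊥ ∧ HasNoSmallIndex 2 P := by
  have : Fact (Nat.Prime 3) := ⟨Nat.prime_three⟩
  obtain ⟨π, hπ⟩ := exists_prime_orderOf_dvd_card (G := Equiv.Perm (Fin k)) 3 <| by
    rw [Fintype.card_perm, Fintype.card_fin]
    exact Nat.dvd_factorial (by omega) hk
  have hcard : Nat.card (Subgroup.zpowers π) = 3 := (Nat.card_zpowers π).trans hπ
  refine ⟨Subgroup.zpowers π, fun hbot => ?_, hasNoSmallIndex_of_prime_card ?_ ?_⟩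
  · simp [hbot] at hcard
  · exact hcard ▸ Nat.prime_three
  · omega

theorem exists_ne_bot_hasNoSmallIndex {k : ℕ} (hk : 2 ≤ k) (hk4 : k ≠ 4) :
    ∃ P : Subgroup (Equiv.Perm (Fin k)), P ≠ ⊥ ∧ HasNoSmallIndex (k - 1) P := by
  obtain rfl | rfl | hk5 : k = 2 ∨ k = 3 ∨ 5 ≤ k := by omega
  · exact ⟨⊤, top_ne_bot, hasNoSmallIndex_one _⟩
  · exact exists_ne_bot_hasNoSmallIndex_two le_rfl
  · have : Nontrivial (alternatingGroup (Fin k)) :=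
      alternatingGroup.nontrivial_of_three_le_card (by rw [Nat.card_fin]; omega)
    exact ⟨_, (Subgroup.nontrivial_iff_ne_bot _).1 this,
      hasNoSmallIndex_alternatingGroup hk5 (by omega)⟩

end HasNoSmallIndex

/-! ### Cayley–Abels graphs -/

namespace IsCayleyAbels

open MulAction

variable {G V W : Type*} [Group G] [TopologicalSpace G] [MulAction G V] [MulAction G W]
  {Γ : SimpleGraph V} {Δ : SimpleGraph W}

theorem connected (hΓ : IsCayleyAbels Γ (toPermHom G V)) : Γ.Connected := hΓ.1

theorem finite_neighborSet (hΓ : IsCayleyAbels Γ (toPermHom G V)) (v : V) :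
    (Γ.neighborSet v).Finite := hΓ.2.1 v

theorem adj_smul (hΓ : IsCayleyAbels Γ (toPermHom G V)) (g : G) {u v : V} (huv : Γ.Adj u v) :
    Γ.Adj (g • u) (g • v) := hΓ.2.2.1 g u v huv

theorem exists_smul_eq (hΓ : IsCayleyAbels Γ (toPermHom G V)) (u v : V) : ∃ g : G, g • u = v :=
  hΓ.2.2.2.1 u v

theorem isCompact_stabilizer (hΓ : IsCayleyAbels Γ (toPermHom G V)) (v : V) :
    IsCompact (stabilizer G v : Set G) := (hΓ.2.2.2.2 v).1

theorem isOpen_stabilizer (hΓ : IsCayleyAbels Γ (toPermHom G V)) (v : V) :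
    IsOpen (stabilizer G v : Set G) := (hΓ.2.2.2.2 v).2

theorem dist_smul (hΓ : IsCayleyAbels Γ (toPermHom G V)) (g : G) (u v : V) :
    Γ.dist (g • u) (g • v) = Γ.dist u v := by
  have hle (g : G) (u v : V) : Γ.dist (g • u) (g • v) ≤ Γ.dist u v := by
    obtain ⟨p, hp⟩ := hΓ.connected.exists_walk_length_eq_dist u v
    let φ : Γ →g Γ := ⟨(g • ·), hΓ.adj_smul g⟩
    rw [← hp, ← SimpleGraph.Walk.length_map φ p]
    exact SimpleGraph.dist_le (p.map φ)
  exact (hle g u v).antisymm (by simpa using hle g⁻¹ (g • u) (g • v))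

theorem ncard_neighborSet_le (hΓ : IsCayleyAbels Γ (toPermHom G V)) (u v : V) :
    (Γ.neighborSet u).ncard ≤ (Γ.neighborSet v).ncard := by
  obtain ⟨g, rfl⟩ := hΓ.exists_smul_eq u v
  exact Set.ncard_le_ncard_of_injOn (g • ·) (fun _ hz => hΓ.adj_smul g hz)
    (MulAction.injective g).injOn (hΓ.finite_neighborSet _)

theorem eq_top_of_neighborSet_subset_orbit (hΓ : IsCayleyAbels Γ (toPermHom G V)) {v : V}
    {L : Subgroup G} (hv : stabilizer G v ≤ L) (hL : Γ.neighborSet v ⊆ orbit L v) : L = ⊤ := by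
  have horbit (u : V) (p : Γ.Walk u v) : u ∈ orbit L v := by
    induction p with
    | nil => exact mem_orbit_self _
    | @cons u u' v huu' _ ih =>
      obtain ⟨l, hl⟩ : ∃ l : L, l • v = u' := ih hv hL
      have hadj : Γ.Adj v (l⁻¹ • u) := by
        have := hΓ.adj_smul (l⁻¹ : L) huu'.symm
        rwa [← hl, ← Subgroup.smul_def, ← Subgroup.smul_def, inv_smul_smul] at this
      obtain ⟨l', hl'⟩ : ∃ l' : L, l' • v = l⁻¹ • u := hL hadj
      exact ⟨l * l', (mul_smul l l' v).trans (by rw [hl', smul_inv_smul])⟩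
  refine (Subgroup.eq_top_iff' L).2 fun g => ?_
  obtain ⟨p⟩ := hΓ.connected (g • v) v
  obtain ⟨l, hl⟩ : ∃ l : L, (l : G) • v = g • v := horbit _ p
  have hmem : (l : G)⁻¹ * g ∈ L := hv (by rw [mem_stabilizer_iff, mul_smul, ← hl, inv_smul_smul])
  simpa using L.mul_mem l.2 hmem

theorem orbit_stabilizer_subset_neighborSet (hΓ : IsCayleyAbels Γ (toPermHom G V)) {v w : V}
    (hvw : Γ.Adj v w) : orbit (stabilizer G v) w ⊆ Γ.neighborSet v := by
  rintro _ ⟨⟨g, hg⟩, rfl⟩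
  have := hΓ.adj_smul g hvw
  rwa [mem_stabilizer_iff.1 hg] at this

theorem relIndex_stabilizer_le_of_edge (hΓ : IsCayleyAbels Γ (toPermHom G V)) {r : ℕ}
    (hr : 1 ≤ r) {u v w : V} (hdeg : (Γ.neighborSet v).ncard ≤ r + 1) (huv : Γ.Adj u v)
    (hvw : Γ.Adj v w) : (stabilizer G w).relIndex (stabilizer G u ⊓ stabilizer G v) ≤ r := by
  obtain rfl | huw := eq_or_ne u w
  · rwa [Subgroup.relIndex_eq_one.2 inf_le_left]
  have horbit : orbit ↥(stabilizer G u ⊓ stabilizer G v) w ⊆ Γ.neighborSet v \ {u} := by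
    rintro _ ⟨⟨g, hgu, hgv⟩, rfl⟩
    refine ⟨?_, fun hgw => huw ?_⟩
    · exact hΓ.orbit_stabilizer_subset_neighborSet hvw ⟨⟨g, hgv⟩, rfl⟩
    · exact smul_left_cancel g ((mem_stabilizer_iff.1 hgu).trans (Set.mem_singleton_iff.1 hgw).symm)
  rw [relIndex_stabilizer_eq_ncard]
  refine (Set.ncard_le_ncard horbit (hΓ.finite_neighborSet v).sdiff).trans ?_
  have hcard := Set.ncard_sdiff_singleton_of_mem (s := Γ.neighborSet v) huv.symm
  omega

variable [IsTopologicalGroup G]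

theorem relIndex_stabilizer_ne_zero (hΓ : IsCayleyAbels Γ (toPermHom G V))
    (hΔ : IsCayleyAbels Δ (toPermHom G W)) (v : V) (w : W) :
    (stabilizer G v).relIndex (stabilizer G w) ≠ 0 :=
  relIndex_ne_zero_of_isCompact_of_isOpen (hΔ.isCompact_stabilizer w) (hΓ.isOpen_stabilizer v)

theorem finite_of_finite (hΓ : IsCayleyAbels Γ (toPermHom G V))
    (hΔ : IsCayleyAbels Δ (toPermHom G W)) [Finite W] : Finite V := by
  obtain ⟨v⟩ := hΓ.connected.nonempty
  obtain ⟨w⟩ := hΔ.connected.nonempty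
  have hw : (stabilizer G w).relIndex ⊤ ≠ 0 := by
    rw [Subgroup.relIndex_top_right, index_stabilizer]
    exact ((Set.ncard_pos (Set.toFinite _)).2 ⟨w, mem_orbit_self w⟩).ne'
  have hv := Subgroup.relIndex_ne_zero_trans (hΓ.relIndex_stabilizer_ne_zero hΔ v w) hw
  rw [Subgroup.relIndex_top_right, index_stabilizer] at hv
  exact Set.finite_univ_iff.1 <| (Set.finite_of_ncard_ne_zero hv).subset
    fun u _ => hΓ.exists_smul_eq v u

theorem hasBoundedOrbit_stabilizer (hΓ : IsCayleyAbels Γ (toPermHom G V))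
    (hΔ : IsCayleyAbels Δ (toPermHom G W)) (v : V) (w : W) :
    HasBoundedOrbit Γ.dist (stabilizer G w) v := by
  have hfin : (orbit (stabilizer G w) v).Finite := Set.finite_of_ncard_ne_zero <| by
    rw [← relIndex_stabilizer_eq_ncard]
    exact hΓ.relIndex_stabilizer_ne_zero hΔ v w
  obtain ⟨M, hM⟩ := (hfin.image (Γ.dist v)).bddAbove
  exact ⟨M, fun h hh => hM ⟨h • v, ⟨⟨h, hh⟩, rfl⟩, rfl⟩⟩

theorem exists_dist_smul_le (hΓ : IsCayleyAbels Γ (toPermHom G V))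
    (hΔ : IsCayleyAbels Δ (toPermHom G W)) :
    ∃ M, ∀ g : G, (∀ w : W, g • w = w) → ∀ v, Γ.dist v (g • v) ≤ M := by
  obtain ⟨v₀⟩ := hΓ.connected.nonempty
  obtain ⟨w₀⟩ := hΔ.connected.nonempty
  obtain ⟨M, hM⟩ := hΓ.hasBoundedOrbit_stabilizer hΔ v₀ w₀
  refine ⟨M, fun g hg v => ?_⟩
  obtain ⟨h, rfl⟩ := hΓ.exists_smul_eq v₀ v
  have hconj : h⁻¹ * g * h ∈ stabilizer G w₀ := by
    rw [mem_stabilizer_iff, mul_smul, mul_smul, hg, inv_smul_smul]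
  have hbound := hM _ hconj
  rwa [← hΓ.dist_smul h, ← mul_smul, ← mul_assoc, mul_inv_cancel_left, mul_smul] at hbound

theorem smul_eq_of_hasNoSmallIndex (hΓ : IsCayleyAbels Γ (toPermHom G V)) {r : ℕ}
    (hedge : ∀ u v w, Γ.Adj u v → Γ.Adj v w →
      (stabilizer G w).relIndex (stabilizer G u ⊓ stabilizer G v) ≤ r)
    {P : Subgroup G} (hP : HasNoSmallIndex r P) {u v : V} (huv : Γ.Adj u v)
    (hPu : P ≤ stabilizer G u) (hPv : P ≤ stabilizer G v) (z : V) : P ≤ stabilizer G z := by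
  obtain ⟨p⟩ := hΓ.connected v z
  induction p generalizing u with
  | nil => exact hPv
  | @cons v w _ hvw _ ih =>
    have hne : (stabilizer G w).relIndex (stabilizer G u ⊓ stabilizer G v) ≠ 0 :=
      mt (Subgroup.relIndex_eq_zero_of_le_right inf_le_left) (hΓ.relIndex_stabilizer_ne_zero hΓ w u)
    have hPle : P ≤ stabilizer G u ⊓ stabilizer G v := le_inf hPu hPv
    exact ih hvw hPv <| hP _ (mt (Subgroup.relIndex_eq_zero_of_le_right hPle) hne) <|
      (Subgroup.relIndex_le_of_le_right hPle hne).trans (hedge u v w huv hvw)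

end IsCayleyAbels

/-! ### Branch permutations of rooted trees -/

section Children

variable {V : Type*} {T : SimpleGraph V} {o u : V}

/-- The neighbours of `u` that are further from the root `o` than `u` is. -/
def children (T : SimpleGraph V) (o u : V) : Set V :=
  {z | T.Adj u z ∧ T.dist o z = T.dist o u + 1}

theorem ncard_children_add_one (hT : T.IsTree) (hfin : (T.neighborSet u).Finite) (hu : u ≠ o) :
    (children T o u).ncard + 1 = (T.neighborSet u).ncard := by
  obtain ⟨a, hua, hoa⟩ := exists_adj_dist_add_one_eq hT.connected hu
  have hsdiff : children T o u = T.neighborSet u \ {a} := by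
    ext z
    refine and_congr_right fun huz => ⟨fun hz => ?_, fun hza => ?_⟩
    · rintro rfl
      omega
    · refine (hT.dist_eq_dist_add_one_of_adj o huz).resolve_left fun hz => hza ?_
      exact eq_of_adj_of_dist_add_one_eq hT huz hua hz.symm hoa
  rw [hsdiff]
  exact Set.ncard_sdiff_singleton_add_one hua hfin

/-- A labelling of the children of every vertex other than the root `o` by the index type `ι`;
nothing is said about `child o`. -/
structure IsChildLabelling {ι : Type*} (T : SimpleGraph V) (o : V) (child : V → ι → V) : Prop where
  injective (u : V) : u ≠ o → Function.Injective (child u)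
  range_eq (u : V) : u ≠ o → Set.range (child u) = children T o u

theorem exists_isChildLabelling {k : ℕ} (hT : T.IsTree)
    (hreg : ∀ v, (T.neighborSet v).ncard = k + 1) (o : V) :
    ∃ child : V → Fin k → V, IsChildLabelling T o child := by
  have hex (u : V) : ∃ c : Fin k → V,
      u ≠ o → Function.Injective c ∧ Set.range c = children T o u := by
    obtain rfl | hu := eq_or_ne u o
    · exact ⟨fun _ => u, fun h => absurd rfl h⟩
    have hfin : (T.neighborSet u).Finite := Set.finite_of_ncard_ne_zero (by rw [hreg]; omega)
    have hcard : (children T o u).ncard = k := by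
      have := ncard_children_add_one hT hfin hu
      rw [hreg] at this
      omega
    have : Finite (children T o u) := hfin.subset fun z hz => hz.1
    let e : children T o u ≃ Fin k := Finite.equivFinOfCardEq hcard
    refine ⟨fun i => e.symm i, fun _ => ⟨Subtype.val_injective.comp e.symm.injective, ?_⟩⟩
    exact (e.symm.surjective.range_comp Subtype.val).trans Subtype.range_coe
  choose child hchild using hex
  exact ⟨child, fun u hu => (hchild u hu).1, fun u hu => (hchild u hu).2⟩

/-- The vertex reached from `u` by following the labels in `l`. -/
def descendant {ι : Type*} (child : V → ι → V) (u : V) (l : List ι) : V := l.foldl child u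

theorem descendant_concat {ι : Type*} (child : V → ι → V) (u : V) (l : List ι) (i : ι) :
    descendant child u (l ++ [i]) = child (descendant child u l) i :=
  List.foldl_concat ..

end Children

namespace IsChildLabelling

variable {V ι : Type*} {T : SimpleGraph V} {o u v : V} {child : V → ι → V}

theorem mem_children (h : IsChildLabelling T o child) (hu : u ≠ o) (i : ι) :
    child u i ∈ children T o u :=
  h.range_eq u hu ▸ Set.mem_range_self i

theorem child_ne (h : IsChildLabelling T o child) (hu : u ≠ o) (i : ι) : child u i ≠ o := by
  intro hi
  have := (h.mem_children hu i).2
  rw [hi, SimpleGraph.dist_self] at this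
  omega

theorem dist_root_descendant (h : IsChildLabelling T o child) (hu : u ≠ o) (l : List ι) :
    T.dist o (descendant child u l) = T.dist o u + l.length := by
  induction l generalizing u with
  | nil => rfl
  | cons i l ih =>
    rw [List.length_cons, ← add_assoc, add_right_comm, ← (h.mem_children hu i).2]
    exact ih (h.child_ne hu i)

theorem descendant_ne (h : IsChildLabelling T o child) (hu : u ≠ o) (l : List ι) :
    descendant child u l ≠ o := by
  induction l generalizing u with
  | nil => exact hu
  | cons i _ ih => exact ih (h.child_ne hu i)

theorem dist_descendant (h : IsChildLabelling T o child) (hT : T.Connected) (hu : u ≠ o)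
    (l : List ι) : T.dist u (descendant child u l) = l.length := by
  apply le_antisymm
  · induction l generalizing u with
    | nil => exact SimpleGraph.dist_self.le
    | cons i l ih =>
      have htri := hT.dist_triangle (u := u) (v := child u i) (w := descendant child u (i :: l))
      rw [SimpleGraph.dist_eq_one_iff_adj.2 (h.mem_children hu i).1] at htri
      have : T.dist (child u i) (descendant child u (i :: l)) ≤ l.length := ih (h.child_ne hu i)
      rw [List.length_cons]
      omega
  · have htri := hT.dist_triangle (u := o) (v := u) (w := descendant child u l)
    rw [h.dist_root_descendant hu] at htri
    omega

theorem eq_of_child_eq (h : IsChildLabelling T o child) (hT : T.IsTree) (hu : u ≠ o) (hv : v ≠ o)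
    {i j : ι} (hij : child u i = child v j) : u = v := by
  obtain ⟨hadj_u, hdist_u⟩ := h.mem_children hu i
  obtain ⟨hadj_v, hdist_v⟩ := h.mem_children hv j
  rw [← hij] at hadj_v hdist_v
  exact eq_of_adj_of_dist_add_one_eq hT hadj_u.symm hadj_v.symm hdist_u.symm hdist_v.symm

theorem descendant_injective (h : IsChildLabelling T o child) (hT : T.IsTree) (hv : v ≠ o) :
    Function.Injective (descendant child v) := by
  intro l l' hll'
  have hlen : l.length = l'.length := by
    rw [← h.dist_descendant hT.connected hv, hll', h.dist_descendant hT.connected hv]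
  induction l using List.reverseRecOn generalizing l' with
  | nil => exact (List.length_eq_zero_iff.1 hlen.symm).symm
  | append_singleton l i ih =>
    obtain rfl | ⟨l', j, rfl⟩ := l'.eq_nil_or_concat'
    · simp at hlen
    rw [descendant_concat, descendant_concat] at hll'
    have hparent := h.eq_of_child_eq hT (h.descendant_ne hv l) (h.descendant_ne hv l') hll'
    rw [hparent] at hll'
    rw [h.injective _ (h.descendant_ne hv l') hll', ih hparent (by simpa using hlen)]

/-- The proper descendants of `v`, indexed by the child of `v` they lie under and the path from
that child. -/
def branchEmbedding (h : IsChildLabelling T o child) (hT : T.IsTree) (hv : v ≠ o) :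
    ι × List ι ↪ V where
  toFun p := descendant child v (p.1 :: p.2)
  inj' _ _ hpq := Prod.ext_iff.2 (List.cons.inj (h.descendant_injective hT hv hpq))

/-- The action of the permutations of `ι` permuting the branches below the children of `v` and
fixing all other vertices. -/
noncomputable def branchPerm (h : IsChildLabelling T o child) (hT : T.IsTree) (hv : v ≠ o) :
    Equiv.Perm ι →* Equiv.Perm V :=
  (Equiv.Perm.viaEmbeddingHom (h.branchEmbedding hT hv)).comp
    (MonoidHom.mk' (fun π => π.prodCongr (Equiv.refl (List ι))) fun _ _ => rfl)

theorem branchPerm_descendant (h : IsChildLabelling T o child) (hT : T.IsTree) (hv : v ≠ o)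
    (π : Equiv.Perm ι) (i : ι) (l : List ι) :
    h.branchPerm hT hv π (descendant child v (i :: l)) = descendant child v (π i :: l) :=
  Equiv.Perm.viaEmbedding_apply _ (h.branchEmbedding hT hv) (i, l)

theorem branchPerm_eq_self (h : IsChildLabelling T o child) (hT : T.IsTree) (hv : v ≠ o)
    (π : Equiv.Perm ι) (hu : ∀ i l, descendant child v (i :: l) ≠ u) :
    h.branchPerm hT hv π u = u :=
  Equiv.Perm.viaEmbedding_apply_of_notMem _ _ _ fun ⟨p, hp⟩ => hu p.1 p.2 hp

theorem branchPerm_eq_self_of_dist_le (h : IsChildLabelling T o child) (hT : T.IsTree)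
    (hv : v ≠ o) (π : Equiv.Perm ι) (hu : T.dist o u ≤ T.dist o v) :
    h.branchPerm hT hv π u = u := by
  refine h.branchPerm_eq_self hT hv π fun i l hil => ?_
  rw [← hil, h.dist_root_descendant hv, List.length_cons] at hu
  omega

theorem adj_branchPerm_child (h : IsChildLabelling T o child) (hT : T.IsTree) (hv : v ≠ o)
    (π : Equiv.Perm ι) (hu : u ≠ o) (j : ι) :
    T.Adj (h.branchPerm hT hv π u) (h.branchPerm hT hv π (child u j)) := by
  by_cases hmem : ∃ i l, descendant child v (i :: l) = u
  · obtain ⟨i, l, rfl⟩ := hmem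
    rw [← descendant_concat child v, List.cons_append, branchPerm_descendant, branchPerm_descendant,
      ← List.cons_append, descendant_concat]
    exact (h.mem_children (h.descendant_ne hv _) j).1
  push Not at hmem
  rw [h.branchPerm_eq_self hT hv π hmem]
  obtain rfl | huv := eq_or_ne u v
  · have hchild : h.branchPerm hT hv π (child u j) = child u (π j) :=
      h.branchPerm_descendant hT hv π j []
    rw [hchild]
    exact (h.mem_children hu (π j)).1
  rw [h.branchPerm_eq_self hT hv π fun i l hil => ?_]
  · exact (h.mem_children hu j).1
  obtain rfl | ⟨l, i', rfl⟩ := l.eq_nil_or_concat'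
  · exact huv (h.eq_of_child_eq hT hv hu hil).symm
  · rw [← List.cons_append, descendant_concat] at hil
    exact hmem i l (h.eq_of_child_eq hT (h.descendant_ne hv _) hu hil)

theorem adj_branchPerm (h : IsChildLabelling T o child) (hT : T.IsTree) (hv : v ≠ o)
    (π : Equiv.Perm ι) {x y : V} (hxy : T.Adj x y) :
    T.Adj (h.branchPerm hT hv π x) (h.branchPerm hT hv π y) := by
  wlog hdist : T.dist o y = T.dist o x + 1 generalizing x y
  · exact (this hxy.symm ((hT.dist_eq_dist_add_one_of_adj o hxy).resolve_right hdist)).symm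
  obtain rfl | hx := eq_or_ne x o
  · have hpos := hT.connected.pos_dist_of_ne hv.symm
    rw [SimpleGraph.dist_self] at hdist
    rwa [h.branchPerm_eq_self_of_dist_le hT hv π (by simp),
      h.branchPerm_eq_self_of_dist_le hT hv π (by omega)]
  · obtain ⟨j, rfl⟩ : y ∈ Set.range (child x) := h.range_eq x hx ▸ ⟨hxy, hdist⟩
    exact h.adj_branchPerm_child hT hv π hx j

theorem exists_le_dist_branchPerm (h : IsChildLabelling T o child) (hT : T.IsTree) (hv : v ≠ o)
    {π : Equiv.Perm ι} {i : ι} (hi : π i ≠ i) (n : ℕ) :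
    ∃ z, n ≤ T.dist z (h.branchPerm hT hv π z) := by
  have hfirst {j : ι} {l : List ι} {a : V} (hva : T.Adj v a)
      (hclose : T.dist (descendant child v (j :: l)) a + 1 =
        T.dist (descendant child v (j :: l)) v) : a = child v j := by
    refine eq_of_adj_of_dist_add_one_eq hT hva (h.mem_children hv j).1 hclose ?_
    rw [SimpleGraph.dist_comm, SimpleGraph.dist_comm (v := v), h.dist_descendant hT.connected hv]
    exact congrArg (· + 1) (h.dist_descendant hT.connected (h.child_ne hv j) l)
  refine ⟨descendant child v (i :: List.replicate n i), ?_⟩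
  rw [branchPerm_descendant]
  rcases dist_eq_add_or_exists_adj_closer hT (descendant child v (i :: List.replicate n i)) v
    (descendant child v (π i :: List.replicate n i)) with hadd | ⟨a, hva, hclose, hclose'⟩
  · rw [hadd, h.dist_descendant hT.connected hv, List.length_cons, List.length_replicate]
    omega
  · exact absurd (h.injective v hv ((hfirst hva hclose').symm.trans (hfirst hva hclose))) hi

end IsChildLabelling

/-! ### Automorphism groups of regular trees -/

theorem exists_mul_pow_lt_pow {q k : ℕ} (hqk : q < k) (C : ℕ) : ∃ n, C * q ^ n < k ^ n := by
  have hlittle := isLittleO_pow_pow_of_lt_left (Nat.cast_nonneg (α := ℝ) q) (Nat.cast_lt.2 hqk)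
  obtain ⟨n, hn⟩ := (hlittle.def (inv_pos.2 (by positivity : (0 : ℝ) < C + 1))).exists
  refine ⟨n, ?_⟩
  rw [Real.norm_of_nonneg (by positivity), Real.norm_of_nonneg (by positivity),
    inv_mul_eq_div, le_div_iff₀ (by positivity)] at hn
  have hle : q ^ n * (C + 1) ≤ k ^ n := by exact_mod_cast hn
  have hkn : 0 < k ^ n := Nat.pow_pos (by omega)
  rcases Nat.eq_zero_or_pos (q ^ n) with hq | hq
  · simpa only [hq, mul_zero] using hkn
  · nlinarith

/-- `G` acts on `T` as the full automorphism group of a `(k + 1)`-regular tree with the permutation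
topology: `k` is the branching number, one less than the degree `d` of the tree. -/
structure IsAutRegularTree (G : Type*) {V : Type*} [Group G] [TopologicalSpace G] [MulAction G V]
    (T : SimpleGraph V) (k : ℕ) : Prop where
  isTree : T.IsTree
  isCayleyAbels : IsCayleyAbels T (MulAction.toPermHom G V)
  ncard_neighborSet (v : V) : (T.neighborSet v).ncard = k + 1
  eq_one_of_smul_eq (g : G) : (∀ v : V, g • v = v) → g = 1
  exists_smul_eq_iso (φ : T ≃g T) : ∃ g : G, ∀ v, g • v = φ v
  hasBasis_nhds_one : (nhds (1 : G)).HasBasis (fun _ : Finset V => True)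
    fun S => {g | ∀ v ∈ S, g • v = v}

/-- `θ` makes the permutations of `Fin k` act by permuting the branches hanging off the vertex `v`
of the tree rooted at `o`, where `c` labels the children of `v`. -/
structure IsBranchAction {G V : Type*} [Group G] [MulAction G V] (T : SimpleGraph V) (o v : V)
    {k : ℕ} (θ : Equiv.Perm (Fin k) →* G) (c : Fin k → V) : Prop where
  range_eq : Set.range c = children T o v
  smul_child (π : Equiv.Perm (Fin k)) (i : Fin k) : θ π • c i = c (π i)
  smul_eq_self (π : Equiv.Perm (Fin k)) (u : V) : T.dist o u ≤ T.dist o v → θ π • u = u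
  exists_le_dist (π : Equiv.Perm (Fin k)) : π ≠ 1 → ∀ n, ∃ z, n ≤ T.dist z (θ π • z)

namespace IsAutRegularTree

open MulAction
open scoped Pointwise

variable {G V W : Type*} [Group G] [TopologicalSpace G] [MulAction G V] [MulAction G W]
  {T : SimpleGraph V} {Δ : SimpleGraph W} {k : ℕ}

theorem eq_of_smul_eq (hG : IsAutRegularTree G T k) {g h : G} (hgh : ∀ v : V, g • v = h • v) :
    g = h := by
  refine (inv_mul_eq_one.1 (hG.eq_one_of_smul_eq _ fun v => ?_)).symm
  rw [mul_smul, hgh, inv_smul_smul]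

theorem exists_monoidHom_smul_eq (hG : IsAutRegularTree G T k) {P : Type*} [Group P]
    (φ : P →* Equiv.Perm V) (hφ : ∀ p u v, T.Adj u v → T.Adj (φ p u) (φ p v)) :
    ∃ θ : P →* G, ∀ p v, θ p • v = φ p v := by
  have hlift (p : P) : ∃ g : G, ∀ v, g • v = φ p v :=
    hG.exists_smul_eq_iso ⟨φ p, fun {u v} => ⟨fun h => by simpa using hφ p⁻¹ _ _ h, hφ p u v⟩⟩
  choose θ hθ using hlift
  refine ⟨MonoidHom.mk' θ fun p q => hG.eq_of_smul_eq fun v => ?_, hθ⟩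
  rw [hθ, mul_smul, hθ, hθ, map_mul, Equiv.Perm.mul_apply]

theorem exists_isBranchAction (hG : IsAutRegularTree G T k) {o v : V} (hv : v ≠ o) :
    ∃ (θ : Equiv.Perm (Fin k) →* G) (c : Fin k → V), IsBranchAction T o v θ c := by
  have hT := hG.isTree
  obtain ⟨child, h⟩ := exists_isChildLabelling hT hG.ncard_neighborSet o
  obtain ⟨θ, hθ⟩ := hG.exists_monoidHom_smul_eq (h.branchPerm hT hv) fun π _ _ =>
    h.adj_branchPerm hT hv π
  refine ⟨θ, child v, h.range_eq v hv, fun π i => ?_, fun π u hu => ?_, fun π hπ n => ?_⟩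
  · exact (hθ ..).trans (h.branchPerm_descendant hT hv π i [])
  · exact (hθ ..).trans (h.branchPerm_eq_self_of_dist_le hT hv π hu)
  · obtain ⟨i, hi⟩ := not_forall.1 fun hall => hπ (Equiv.ext hall)
    simp only [hθ]
    exact h.exists_le_dist_branchPerm hT hv hi n

theorem exists_dist_eq (hG : IsAutRegularTree G T k) (hk : 1 ≤ k) (o : V) (n : ℕ) :
    ∃ v, T.dist o v = n := by
  obtain ⟨child, h⟩ := exists_isChildLabelling hG.isTree hG.ncard_neighborSet o
  obtain ⟨u, hou⟩ : (T.neighborSet o).Nonempty :=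
    Set.nonempty_of_ncard_ne_zero (by rw [hG.ncard_neighborSet]; omega)
  obtain _ | n := n
  · exact ⟨o, SimpleGraph.dist_self⟩
  · refine ⟨descendant child u (List.replicate n ⟨0, hk⟩), ?_⟩
    rw [h.dist_root_descendant hou.ne', SimpleGraph.dist_eq_one_iff_adj.2 hou,
      List.length_replicate, add_comm]

theorem not_hasBoundedOrbit_top (hG : IsAutRegularTree G T k) (hk : 1 ≤ k) (x : V) :
    ¬HasBoundedOrbit T.dist (⊤ : Subgroup G) x := by
  rintro ⟨M, hM⟩
  obtain ⟨y, hy⟩ := hG.exists_dist_eq hk x (M + 1)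
  obtain ⟨g, rfl⟩ := hG.isCayleyAbels.exists_smul_eq x y
  have := hM g trivial
  omega

theorem infinite (hG : IsAutRegularTree G T k) (hk : 1 ≤ k) : Infinite V := by
  obtain ⟨o⟩ := hG.isTree.connected.nonempty
  exact Infinite.of_surjective (T.dist o) (hG.exists_dist_eq hk o)

theorem stabilizer_inf_stabilizer_le (hG : IsAutRegularTree G T k) {x y p : V} (hyp : T.Adj y p)
    (hxp : T.dist x p + 1 = T.dist x y) : stabilizer G y ⊓ stabilizer G x ≤ stabilizer G p := by
  intro g hg
  obtain ⟨hgy, hgx⟩ : g • y = y ∧ g • x = x := hg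
  refine eq_of_adj_of_dist_add_one_eq hG.isTree (o := x) (v := y) ?_ hyp ?_ hxp
  · simpa only [hgy] using hG.isCayleyAbels.adj_smul g hyp
  · rw [← hxp, ← hG.isCayleyAbels.dist_smul g x p, hgx]

theorem closure_insert_ne_top (hG : IsAutRegularTree G T k) (hk : 1 ≤ k) {H : Subgroup G} {x : V}
    (hH : HasBoundedOrbit T.dist H x) {a : G} (ha : ∀ h ∈ H, ¬IsHyperbolic T.dist (h * a)) :
    Subgroup.closure (insert a (H : Set G)) ≠ ⊤ := fun htop =>
  hG.not_hasBoundedOrbit_top hk x <| htop ▸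
    (isZeroHyperbolic_dist hG.isTree).hasBoundedOrbit_closure_insert
      hG.isCayleyAbels.dist_smul hH ha

theorem exists_forall_smul_eq_imp_mem (hG : IsAutRegularTree G T k) {U : Subgroup G}
    (hU : IsOpen (U : Set G)) (o : V) :
    ∃ n, ∀ g : G, (∀ u, T.dist o u ≤ n → g • u = u) → g ∈ U := by
  obtain ⟨S, -, hS⟩ := hG.hasBasis_nhds_one.mem_iff.1 (hU.mem_nhds U.one_mem)
  exact ⟨S.sup (T.dist o), fun g hg => hS fun v hv => hg v (Finset.le_sup hv)⟩

variable [IsTopologicalGroup G]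

theorem le_relIndex_stabilizer_child (hG : IsAutRegularTree G T k) {x y z : V} (hy : y ≠ x)
    (hz : z ∈ children T x y) :
    k ≤ (stabilizer G z).relIndex (stabilizer G y ⊓ stabilizer G x) := by
  obtain ⟨θ, c, hθ⟩ := hG.exists_isBranchAction hy
  have hfin : (orbit ↥(stabilizer G y ⊓ stabilizer G x) z).Finite :=
    Set.finite_of_ncard_ne_zero <| by
      rw [← relIndex_stabilizer_eq_ncard]
      exact mt (Subgroup.relIndex_eq_zero_of_le_right inf_le_left)
        (hG.isCayleyAbels.relIndex_stabilizer_ne_zero hG.isCayleyAbels z y)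
  have hsub : children T x y ⊆ orbit ↥(stabilizer G y ⊓ stabilizer G x) z := by
    rw [← hθ.range_eq] at hz ⊢
    obtain ⟨i, rfl⟩ := hz
    rintro _ ⟨j, rfl⟩
    refine ⟨⟨θ (Equiv.swap i j), hθ.smul_eq_self _ _ le_rfl, hθ.smul_eq_self _ _ (by simp)⟩, ?_⟩
    exact (hθ.smul_child _ i).trans (by rw [Equiv.swap_apply_left])
  have hcard := ncard_children_add_one hG.isTree (hG.isCayleyAbels.finite_neighborSet y) hy
  rw [hG.ncard_neighborSet] at hcard
  rw [relIndex_stabilizer_eq_ncard]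
  have := Set.ncard_le_ncard hsub hfin
  omega

theorem pow_le_relIndex_stabilizer (hG : IsAutRegularTree G T k) {x y : V} {n : ℕ}
    (hxy : T.dist x y = n + 1) : k ^ n ≤ (stabilizer G y).relIndex (stabilizer G x) := by
  induction n generalizing y with
  | zero =>
    exact Nat.one_le_iff_ne_zero.2
      (hG.isCayleyAbels.relIndex_stabilizer_ne_zero hG.isCayleyAbels y x)
  | succ n ih =>
    have hyx : y ≠ x := by
      rintro rfl
      simp at hxy
    obtain ⟨p, hyp, hxp⟩ := exists_adj_dist_add_one_eq hG.isTree.connected hyx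
    have hpx : p ≠ x := by
      rintro rfl
      rw [SimpleGraph.dist_self] at hxp
      omega
    have hparent := hG.stabilizer_inf_stabilizer_le hyp hxp
    calc
      k ^ (n + 1) = k * k ^ n := pow_succ' k n
      _ ≤ (stabilizer G y).relIndex (stabilizer G p ⊓ stabilizer G x) *
          (stabilizer G p).relIndex (stabilizer G x) :=
        Nat.mul_le_mul (hG.le_relIndex_stabilizer_child hpx ⟨hyp.symm, hxp.symm⟩)
          (ih (by omega))
      _ = (stabilizer G y ⊓ stabilizer G p).relIndex (stabilizer G x) :=
        Subgroup.relIndex_inf_mul_relIndex ..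
      _ = (stabilizer G y).relIndex (stabilizer G x) := by
        rw [← Subgroup.inf_relIndex_right, inf_right_comm, inf_of_le_left hparent,
          Subgroup.inf_relIndex_right]

/-- The index of `U ∩ g ^ n U g ^ (-n)` in `U` grows at most like `μ ^ n` with `μ` the index for
`n = 1`, whereas the orbits of a vertex stabilizer show that it grows at least like `k ^ n`. -/
theorem le_relIndex_conj_of_isHyperbolic (hG : IsAutRegularTree G T k) {U : Subgroup G}
    (hUcompact : IsCompact (U : Set G)) (hUopen : IsOpen (U : Set G)) {g : G}
    (hg : IsHyperbolic T.dist g) : k ≤ (MulAut.conj g • U).relIndex U := by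
  by_contra! hlt
  set μ := (MulAut.conj g • U).relIndex U
  obtain ⟨x, hx⟩ := (isZeroHyperbolic_dist hG.isTree).exists_le_dist_pow_smul
    hG.isCayleyAbels.dist_smul hg
  have hxU : (stabilizer G x).relIndex U ≠ 0 :=
    relIndex_ne_zero_of_isCompact_of_isOpen hUcompact (hG.isCayleyAbels.isOpen_stabilizer x)
  have hUx : U.relIndex (stabilizer G x) ≠ 0 :=
    relIndex_ne_zero_of_isCompact_of_isOpen (hG.isCayleyAbels.isCompact_stabilizer x) hUopen
  have hU (h : G) : (MulAut.conj h • U).relIndex U ≠ 0 :=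
    relIndex_ne_zero_of_isCompact_of_isOpen hUcompact (isOpen_conj_smul hUopen h)
  set C := (stabilizer G x).relIndex U * (μ * U.relIndex (stabilizer G x))
  have hbound (n : ℕ) : k ^ n ≤ C * μ ^ n := by
    obtain ⟨m, hm⟩ : ∃ m, T.dist x (g ^ (n + 1) • x) = m + 1 :=
      Nat.exists_eq_add_one_of_ne_zero (by have := hx (n + 1); omega)
    calc
      k ^ n ≤ k ^ m := Nat.pow_le_pow_right (by omega) (by have := hx (n + 1); omega)
      _ ≤ (MulAut.conj (g ^ (n + 1)) • stabilizer G x).relIndex (stabilizer G x) := by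
        rw [conj_smul_stabilizer]
        exact hG.pow_le_relIndex_stabilizer hm
      _ ≤ (stabilizer G x).relIndex U * (μ ^ (n + 1) * U.relIndex (stabilizer G x)) :=
        (relIndex_conj_le_mul hxU hUx (hU _)).trans <| Nat.mul_le_mul_left _ <|
          Nat.mul_le_mul_right _ (relIndex_conj_pow_le U g hU (n + 1))
      _ = C * μ ^ n := by ring
  obtain ⟨n, hn⟩ := exists_mul_pow_lt_pow hlt C
  exact (hbound n).not_gt hn

theorem not_isHyperbolic_of_adj (hG : IsAutRegularTree G T k)
    (hΔ : IsCayleyAbels Δ (toPermHom G W)) (hk : 2 ≤ k)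
    (hdeg : ∀ w, (Δ.neighborSet w).ncard ≤ k) {w : W} {g : G} (hg : Δ.Adj w (g • w)) :
    ¬IsHyperbolic T.dist g := by
  intro hyp
  have hle := hG.le_relIndex_conj_of_isHyperbolic (U := stabilizer G w ⊓ stabilizer G (g • w))
    ((hΔ.isCompact_stabilizer w).inter_right
      (Subgroup.isClosed_of_isOpen _ (hΔ.isOpen_stabilizer _)))
    ((hΔ.isOpen_stabilizer w).inter (hΔ.isOpen_stabilizer _)) hyp
  have hinf : (stabilizer G (g • w) ⊓ stabilizer G (g • g • w)) ⊓
      (stabilizer G w ⊓ stabilizer G (g • w)) =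
      stabilizer G (g • g • w) ⊓ (stabilizer G w ⊓ stabilizer G (g • w)) := by
    rw [inf_comm (stabilizer G (g • w)), inf_assoc, inf_eq_right.2 inf_le_right]
  rw [Subgroup.smul_inf, conj_smul_stabilizer, conj_smul_stabilizer,
    ← Subgroup.inf_relIndex_right, hinf, Subgroup.inf_relIndex_right] at hle
  have hedge := hΔ.relIndex_stabilizer_le_of_edge (r := k - 1) (by omega)
    ((hdeg (g • w)).trans (by omega)) hg (hΔ.adj_smul g hg)
  omega

theorem not_isHyperbolic_mul_of_adj (hG : IsAutRegularTree G T k)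
    (hΔ : IsCayleyAbels Δ (toPermHom G W)) (hk : 2 ≤ k)
    (hdeg : ∀ w, (Δ.neighborSet w).ncard ≤ k) {w : W} {g h : G} (hg : Δ.Adj w (g • w))
    (hh : h ∈ stabilizer G w) : ¬IsHyperbolic T.dist (h * g) := by
  refine hG.not_isHyperbolic_of_adj hΔ hk hdeg (w := w) ?_
  rw [mul_smul]
  exact hΔ.orbit_stabilizer_subset_neighborSet hg ⟨⟨h, hh⟩, rfl⟩

theorem not_neighborSet_subset_insert (hG : IsAutRegularTree G T k)
    (hΔ : IsCayleyAbels Δ (toPermHom G W)) (hk : 2 ≤ k)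
    (hdeg : ∀ w, (Δ.neighborSet w).ncard ≤ k) {w : W} {a : G} (ha : Δ.Adj w (a • w)) :
    ¬Δ.neighborSet w ⊆ insert (a⁻¹ • w) (orbit (stabilizer G w) (a • w)) := by
  intro hsub
  obtain ⟨x⟩ := hG.isTree.connected.nonempty
  set L := Subgroup.closure (insert a (stabilizer G w : Set G))
  have haL : a ∈ L := Subgroup.subset_closure (Set.mem_insert ..)
  have hwL : stabilizer G w ≤ L := (Set.subset_insert ..).trans Subgroup.subset_closure
  refine hG.closure_insert_ne_top (by omega) (hG.isCayleyAbels.hasBoundedOrbit_stabilizer hΔ x w)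
    (a := a)
    (fun h hh => hG.not_isHyperbolic_mul_of_adj hΔ hk hdeg ha hh)
    (hΔ.eq_top_of_neighborSet_subset_orbit hwL fun u hu => ?_)
  obtain rfl | ⟨⟨h, hh⟩, rfl⟩ := hsub hu
  · exact ⟨⟨a⁻¹, L.inv_mem haL⟩, rfl⟩
  · exact ⟨⟨h * a, L.mul_mem (hwL hh) haL⟩, mul_smul h a w⟩

theorem closure_insert_closure_insert_ne_top (hG : IsAutRegularTree G T k) (hk : 1 ≤ k)
    {U : Subgroup G} (hUcompact : IsCompact (U : Set G)) (hUopen : IsOpen (U : Set G)) {x : V}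
    (hUx : HasBoundedOrbit T.dist U x) {a b : G} (hbU : MulAut.conj b • U = U)
    (hb : ∀ h ∈ U, ¬IsHyperbolic T.dist (h * b)) (ha : (MulAut.conj a • U).relIndex U < k) :
    Subgroup.closure (insert a (Subgroup.closure (insert b (U : Set G)) : Set G)) ≠ ⊤ := by
  have hnormalizes : Subgroup.closure (insert b (U : Set G)) ≤
      (stabilizer (MulAut G) U).comap MulAut.conj :=
    (Subgroup.closure_le _).2 <|
      Set.insert_subset hbU fun _ hh => Subgroup.conj_smul_eq_self_of_mem hh
  have hbounded := (isZeroHyperbolic_dist hG.isTree).hasBoundedOrbit_closure_insert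
    hG.isCayleyAbels.dist_smul hUx hb
  refine hG.closure_insert_ne_top hk hbounded fun h hh hyp => ha.not_ge ?_
  calc
    k ≤ (MulAut.conj (h * a) • U).relIndex U :=
      hG.le_relIndex_conj_of_isHyperbolic hUcompact hUopen hyp
    _ = (MulAut.conj h • MulAut.conj a • U).relIndex (MulAut.conj h • U) := by
      rw [map_mul, mul_smul, show MulAut.conj h • U = U from hnormalizes hh]
    _ = (MulAut.conj a • U).relIndex U := Subgroup.relIndex_pointwise_smul ..

theorem neighborSet_ne_insert (hG : IsAutRegularTree G T k)
    (hΔ : IsCayleyAbels Δ (toPermHom G W)) (hk : 2 ≤ k)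
    (hdeg : ∀ w, (Δ.neighborSet w).ncard ≤ k) {w : W} {a b : G} (hb : Δ.Adj w (b • w))
    (hbb : b • b • w = w) (hbO : b • w ∉ orbit (stabilizer G w) (a • w))
    (ha : (stabilizer G (a • w)).relIndex (stabilizer G w) < k) :
    Δ.neighborSet w ≠ insert (b • w) (orbit (stabilizer G w) (a • w)) := by
  intro hN
  obtain ⟨x⟩ := hG.isTree.connected.nonempty
  have hnormal : MulAut.conj b • stabilizer G w = stabilizer G w :=
    conj_smul_stabilizer_eq_of_swap hbb fun h hh =>
      (hN.le (hΔ.orbit_stabilizer_subset_neighborSet hb ⟨⟨h, hh⟩, rfl⟩)).resolve_right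
        fun hmem => hbO <| by
          simpa only [Subgroup.smul_def, Subgroup.coe_inv, inv_smul_smul] using
            mem_orbit_of_mem_orbit (⟨h, hh⟩⁻¹ : stabilizer G w) hmem
  set H := Subgroup.closure (insert b (stabilizer G w : Set G))
  have hbH : b ∈ H := Subgroup.subset_closure (Set.mem_insert ..)
  have hwH : stabilizer G w ≤ H := (Set.subset_insert ..).trans Subgroup.subset_closure
  set L := Subgroup.closure (insert a (H : Set G))
  have haL : a ∈ L := Subgroup.subset_closure (Set.mem_insert ..)
  have hHL : H ≤ L := (Set.subset_insert ..).trans Subgroup.subset_closure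
  refine hG.closure_insert_closure_insert_ne_top (by omega) (hΔ.isCompact_stabilizer w)
    (hΔ.isOpen_stabilizer w) (hG.isCayleyAbels.hasBoundedOrbit_stabilizer hΔ x w) hnormal
    (fun h hh => hG.not_isHyperbolic_mul_of_adj hΔ hk hdeg hb hh) (by rwa [conj_smul_stabilizer])
    (hΔ.eq_top_of_neighborSet_subset_orbit (hwH.trans hHL) fun u hu => ?_)
  obtain rfl | ⟨⟨h, hh⟩, rfl⟩ := hN.le hu
  · exact ⟨⟨b, hHL hbH⟩, rfl⟩
  · exact ⟨⟨h * a, L.mul_mem (hHL (hwH hh)) haL⟩, mul_smul h a w⟩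

theorem ncard_orbit_add_one_lt (hG : IsAutRegularTree G T k)
    (hΔ : IsCayleyAbels Δ (toPermHom G W)) (hk : 2 ≤ k)
    (hdeg : ∀ w, (Δ.neighborSet w).ncard ≤ k) {w : W} {a : G} (ha : Δ.Adj w (a • w)) :
    (orbit (stabilizer G w) (a • w)).ncard + 1 < k := by
  set O := orbit (stabilizer G w) (a • w)
  by_contra! hlarge
  have hON : O ⊆ Δ.neighborSet w := hΔ.orbit_stabilizer_subset_neighborSet ha
  have hNfin := hΔ.finite_neighborSet w
  obtain ⟨u, huN, huO⟩ := Set.not_subset.1 fun hsub : Δ.neighborSet w ⊆ O =>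
    hG.not_neighborSet_subset_insert hΔ hk hdeg ha (hsub.trans (Set.subset_insert ..))
  obtain ⟨b, rfl⟩ := hΔ.exists_smul_eq w u
  have hinsert := Set.ncard_insert_of_notMem huO (hNfin.subset hON)
  have hN : insert (b • w) O = Δ.neighborSet w :=
    Set.eq_of_subset_of_ncard_le (Set.insert_subset huN hON)
      ((hdeg w).trans (by omega)) hNfin
  have hbinv : Δ.Adj w (b⁻¹ • w) := by simpa using (hΔ.adj_smul b⁻¹ huN).symm
  have hsmall : O.ncard < k := by
    have := hdeg w
    rw [← hN] at this
    omega
  obtain hbb | hbO := hN.ge hbinv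
  · refine hG.neighborSet_ne_insert hΔ hk hdeg huN ?_ huO ?_ hN.symm
    · rw [← hbb, smul_inv_smul]
    · rwa [relIndex_stabilizer_eq_ncard]
  · refine hG.not_neighborSet_subset_insert hΔ hk hdeg hbinv ?_
    rw [inv_inv, orbit_eq_iff.2 hbO, hN]

theorem infinite_of_isCayleyAbels (hG : IsAutRegularTree G T k)
    (hΔ : IsCayleyAbels Δ (toPermHom G W)) (hk : 1 ≤ k) : Infinite W :=
  not_finite_iff_infinite.1 fun _ =>
    not_finite_iff_infinite.2 (hG.infinite hk) (hG.isCayleyAbels.finite_of_finite hΔ)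

theorem exists_adj (hG : IsAutRegularTree G T k) (hΔ : IsCayleyAbels Δ (toPermHom G W))
    (hk : 1 ≤ k) : ∃ u v, Δ.Adj u v := by
  have := hG.infinite_of_isCayleyAbels hΔ hk
  obtain ⟨u, v, huv⟩ := exists_pair_ne W
  obtain ⟨z, huz, -⟩ := exists_adj_dist_add_one_eq hΔ.connected huv
  exact ⟨u, z, huz⟩

theorem eq_bot_of_hasNoSmallIndex (hG : IsAutRegularTree G T k)
    (hΔ : IsCayleyAbels Δ (toPermHom G W)) (hk : 1 ≤ k) {r : ℕ}
    (hedge : ∀ u v w, Δ.Adj u v → Δ.Adj v w →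
      (stabilizer G w).relIndex (stabilizer G u ⊓ stabilizer G v) ≤ r)
    {P : Subgroup (Equiv.Perm (Fin k))} (hP : HasNoSmallIndex r P) : P = ⊥ := by
  obtain ⟨o⟩ := hG.isTree.connected.nonempty
  obtain ⟨u, v, huv⟩ := hG.exists_adj hΔ hk
  obtain ⟨n, hn⟩ := hG.exists_forall_smul_eq_imp_mem (U := stabilizer G u ⊓ stabilizer G v)
    ((hΔ.isOpen_stabilizer u).inter (hΔ.isOpen_stabilizer v)) o
  obtain ⟨y, hy⟩ := hG.exists_dist_eq hk o (n + 1)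
  have hyo : y ≠ o := by
    rintro rfl
    simp at hy
  obtain ⟨θ, c, hθ⟩ := hG.exists_isBranchAction hyo
  have hfix : P.map θ ≤ stabilizer G u ⊓ stabilizer G v := by
    rintro _ ⟨π, -, rfl⟩
    exact hn _ fun z hz => hθ.smul_eq_self π z (by omega)
  have htrivial := hΔ.smul_eq_of_hasNoSmallIndex hedge (hP.map θ) huv
    (hfix.trans inf_le_left) (hfix.trans inf_le_right)
  obtain ⟨M, hM⟩ := hG.isCayleyAbels.exists_dist_smul_le hΔ
  refine (Subgroup.eq_bot_iff_forall P).2 fun π hπ => by_contra fun hne => ?_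
  obtain ⟨z, hz⟩ := hθ.exists_le_dist π hne (M + 1)
  have := hM (θ π) (fun w => htrivial w ⟨π, hπ, rfl⟩) z
  omega

theorem relIndex_stabilizer_inf_add_one_lt (hG : IsAutRegularTree G T k)
    (hΔ : IsCayleyAbels Δ (toPermHom G W)) (hk : 2 ≤ k)
    (hdeg : ∀ w, (Δ.neighborSet w).ncard ≤ k) (u : W) {v w : W} (hvw : Δ.Adj v w) :
    (stabilizer G w).relIndex (stabilizer G u ⊓ stabilizer G v) + 1 < k := by
  have hle : (stabilizer G w).relIndex (stabilizer G u ⊓ stabilizer G v) ≤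
      (stabilizer G w).relIndex (stabilizer G v) :=
    Subgroup.relIndex_le_of_le_right inf_le_right (hΔ.relIndex_stabilizer_ne_zero hΔ w v)
  obtain ⟨a, rfl⟩ := hΔ.exists_smul_eq v w
  have horbit := hG.ncard_orbit_add_one_lt hΔ hk hdeg hvw
  rw [← relIndex_stabilizer_eq_ncard] at horbit
  omega

theorem lt_ncard_neighborSet (hG : IsAutRegularTree G T k)
    (hΔ : IsCayleyAbels Δ (toPermHom G W)) (hk : 1 ≤ k) (w : W) :
    k < (Δ.neighborSet w).ncard := by
  by_contra! hw
  have hdeg (u : W) : (Δ.neighborSet u).ncard ≤ k := (hΔ.ncard_neighborSet_le u w).trans hw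
  obtain rfl | rfl | ⟨hk2, hk4⟩ : k = 1 ∨ k = 4 ∨ 2 ≤ k ∧ k ≠ 4 := by omega
  · have := hG.infinite_of_isCayleyAbels hΔ le_rfl
    have := finite_of_ncard_neighborSet_le_one hΔ.connected hΔ.finite_neighborSet hdeg
    exact not_finite W
  · obtain ⟨P, hPbot, hP⟩ := exists_ne_bot_hasNoSmallIndex_two (k := 4) (by omega)
    refine hPbot (hG.eq_bot_of_hasNoSmallIndex hΔ hk (fun u v z _ hvz => ?_) hP)
    have := hG.relIndex_stabilizer_inf_add_one_lt hΔ (by omega) hdeg u hvz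
    omega
  · obtain ⟨P, hPbot, hP⟩ := exists_ne_bot_hasNoSmallIndex hk2 hk4
    exact hPbot <| hG.eq_bot_of_hasNoSmallIndex hΔ hk
      (fun _ v _ => hΔ.relIndex_stabilizer_le_of_edge (by omega)
        ((hdeg v).trans (by omega))) hP

end IsAutRegularTree

/-- Let `d ≥ 2` and let `T` be a `d`-regular tree.  If `G` is a Hausdorff topological group
with a faithful vertex-transitive action on `T` by graph automorphisms such that every
automorphism of `T` is induced by an element of `G`, vertex stabilizers are compact open,
and pointwise stabilizers of finite vertex sets form a neighbourhood basis of the identity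
(so that `G` is `Aut(T)` with the permutation topology), then every Cayley–Abels graph for
`G` has degree at least `d`; consequently `T` itself is a Cayley–Abels graph of minimal
degree for `G`, i.e. `md(Aut(T_d)) = d`. -/
theorem minimalDegree_aut_regular_tree {V : Type*} (G : Type*) [Group G]
    [TopologicalSpace G] [IsTopologicalGroup G] [T2Space G]
    (d : ℕ) (hd : 2 ≤ d) (T : SimpleGraph V) (hT : T.IsTree)
    (hreg : ∀ v : V, (T.neighborSet v).ncard = d)
    (ρ : G →* Equiv.Perm V)
    (hfaith : ∀ g : G, (∀ v : V, ρ g v = v) → g = 1)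
    (htrans : ∀ u v : V, ∃ g : G, ρ g u = v)
    (hpres : ∀ (g : G) (u v : V), T.Adj u v → T.Adj (ρ g u) (ρ g v))
    (hfull : ∀ φ : T ≃g T, ∃ g : G, ∀ v : V, ρ g v = φ v)
    (hstab : ∀ v : V, IsCompact {g : G | ρ g v = v} ∧ IsOpen {g : G | ρ g v = v})
    (hbasis : (nhds (1 : G)).HasBasis (fun _ : Finset V => True)
      (fun S : Finset V => {g : G | ∀ v ∈ S, ρ g v = v})) :
    IsCayleyAbels T ρ ∧
      ∀ (W : Type u) (Δ : SimpleGraph W) (σ : G →* Equiv.Perm W),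
        IsCayleyAbels Δ σ → ∀ w : W, d ≤ (Δ.neighborSet w).ncard := by
  have hCA : IsCayleyAbels T ρ :=
    ⟨hT.connected, fun v => Set.finite_of_ncard_ne_zero (by rw [hreg]; omega), hpres, htrans, hstab⟩
  refine ⟨hCA, fun W Δ σ hΔ w => ?_⟩
  obtain ⟨k, rfl⟩ := Nat.exists_eq_add_of_le' (one_le_two.trans hd)
  let _ : MulAction G V := MulAction.compHom V ρ
  let _ : MulAction G W := MulAction.compHom W σ
  have hG : IsAutRegularTree G T k := ⟨hT, hCA, hreg, hfaith, hfull, hbasis⟩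
  exact hG.lt_ncard_neighborSet hΔ (by omega) w
end

section
/- Let G be a non-compact, compactly generated t.d.l.c. group. Then the following are equivalent: (1) G has a Cayley–Abels graph of degree 2 (equivalently, the two-sided line graph with vertex set ℤ, where i and j are adjacent if and only if |i − j| = 1, is a Cayley–Abels graph for G); (2) there exists a continuous surjective group homomorphism from G onto the infinite cyclic group ℤ or onto the infinite dihedral group D∞ (each with the discrete topology) whose kernel is a compact open subgroup of G. -/
/-- The two-sided line graph on `ℤ`: `i` and `j` are adjacent iff `|i - j| = 1`. -/
def lineGraphZ : SimpleGraph ℤ := SimpleGraph.fromRel (fun i j => j = i + 1)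

/-!
Every injective graph endomorphism of the line is an isometry `x ↦ ±x + i`, so a vertex-transitive
action on the line is a homomorphism `φ : G → D∞` with infinite image, and its kernel, the
pointwise stabilizer of `{0, 1}`, is compact and open. An infinite subgroup of `D∞` is infinite
cyclic if it consists of rotations and otherwise is itself a copy of `D∞`, so the image of `φ` is
the required quotient. Conversely, `ℤ` and `D∞` act on the line transitively with finite
stabilizers, and such an action pulls back along a homomorphism with compact open kernel.
-/

section TopologicalGroup

variable {G K : Type*} [Group G] [TopologicalSpace G] [IsTopologicalGroup G] [Group K]

theorem continuous_of_isOpen_ker [TopologicalSpace K] [DiscreteTopology K] {φ : G →* K}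
    (ho : IsOpen (φ.ker : Set G)) : Continuous φ := by
  refine continuous_of_continuousAt_one φ ?_
  rw [ContinuousAt, map_one, nhds_discrete K, Filter.tendsto_pure]
  exact ho.mem_nhds (one_mem φ.ker)

theorem isCompact_preimage_singleton_of_isCompact_ker {φ : G →* K}
    (hc : IsCompact (φ.ker : Set G)) (k : K) : IsCompact (φ ⁻¹' {k}) := by
  by_cases hk : ∃ g, φ g = k
  · obtain ⟨g, rfl⟩ := hk
    have fiber_eq_coset : φ ⁻¹' {φ g} = (g⁻¹ * ·) ⁻¹' (φ.ker : Set G) := by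
      ext x
      simp [MonoidHom.mem_ker, inv_mul_eq_one, eq_comm (a := φ g)]
    rw [fiber_eq_coset]
    exact (Homeomorph.mulLeft g⁻¹).isCompact_preimage.mpr hc
  · have fiber_eq_empty : φ ⁻¹' {k} = ∅ :=
      Set.preimage_singleton_eq_empty.mpr hk
    rw [fiber_eq_empty]
    exact isCompact_empty

theorem isCompact_preimage_of_isCompact_ker {φ : G →* K} (hc : IsCompact (φ.ker : Set G))
    {s : Set K} (hs : s.Finite) : IsCompact (φ ⁻¹' s) := by
  rw [← Set.biUnion_preimage_singleton]
  exact hs.isCompact_biUnion fun k _ ↦ isCompact_preimage_singleton_of_isCompact_ker hc k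

theorem exists_surjective_of_range_mulEquiv {H : Type*} [Group H] {φ : G →* H}
    (hc : IsCompact (φ.ker : Set G)) (ho : IsOpen (φ.ker : Set G)) (e : φ.range ≃* K) :
    ∃ ψ : G →* K, Function.Surjective ψ ∧ @Continuous G K _ ⊥ ψ ∧
      IsCompact (ψ.ker : Set G) ∧ IsOpen (ψ.ker : Set G) := by
  let _ : TopologicalSpace K := ⊥
  have : DiscreteTopology K := ⟨rfl⟩
  let ψ : G →* K := e.toMonoidHom.comp φ.rangeRestrict
  have ker_eq : ψ.ker = φ.ker :=
    (φ.rangeRestrict.ker_mulEquiv_comp e).trans φ.ker_rangeRestrict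
  refine ⟨ψ, e.surjective.comp φ.rangeRestrict_surjective, continuous_of_isOpen_ker ?_, ?_, ?_⟩ <;>
    rwa [ker_eq]

end TopologicalGroup

namespace IsCayleyAbels

variable {G K V : Type*} [Group G] [TopologicalSpace G] [IsTopologicalGroup G] [Group K]
  {Γ : SimpleGraph V}

theorem isCompact_stabilizer_inter {ρ : G →* Equiv.Perm V} (h : IsCayleyAbels Γ ρ) (u v : V) :
    IsCompact ({g | ρ g u = u} ∩ {g | ρ g v = v}) := by
  obtain ⟨-, -, -, -, hstab⟩ := h
  let stabilizer : Subgroup G := (MulAction.stabilizer (Equiv.Perm V) v).comap ρ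
  have isClosed_stabilizer : IsClosed {g | ρ g v = v} :=
    stabilizer.isClosed_of_isOpen (hstab v).2
  exact (hstab u).1.inter_right isClosed_stabilizer

theorem comp [TopologicalSpace K] [DiscreteTopology K] {σ : K →* Equiv.Perm V}
    (h : IsCayleyAbels Γ σ) {φ : G →* K} (hc : IsCompact (φ.ker : Set G))
    (ho : IsOpen (φ.ker : Set G)) (htrans : ∀ u v, ∃ g, σ (φ g) u = v) :
    IsCayleyAbels Γ (σ.comp φ) := by
  obtain ⟨hconn, hfin, hadj, -, hstab⟩ := h
  refine ⟨hconn, hfin, fun g ↦ hadj (φ g), htrans, fun v ↦ ⟨?_, ?_⟩⟩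
  · exact isCompact_preimage_of_isCompact_ker hc (hstab v).1.finite_of_discrete
  · exact (hstab v).2.preimage (continuous_of_isOpen_ker ho)

end IsCayleyAbels

section LineGraph

theorem lineGraphZ_adj {i j : ℤ} : lineGraphZ.Adj i j ↔ j = i + 1 ∨ i = j + 1 := by
  rw [lineGraphZ, SimpleGraph.fromRel_adj]
  lia

theorem lineGraphZ_eq_hasse : lineGraphZ = SimpleGraph.hasse ℤ := by
  ext i j
  rw [lineGraphZ_adj, SimpleGraph.hasse_adj, Order.covBy_iff_add_one_eq,
    Order.covBy_iff_add_one_eq, eq_comm, eq_comm (a := i)]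

theorem lineGraphZ_connected : lineGraphZ.Connected where
  preconnected := lineGraphZ_eq_hasse ▸ SimpleGraph.hasse_preconnected_of_succ ℤ
  nonempty := ⟨0⟩

theorem finite_neighborSet_lineGraphZ (i : ℤ) : (lineGraphZ.neighborSet i).Finite := by
  refine (Set.finite_Icc (i - 1) (i + 1)).subset fun j hj ↦ ?_
  rw [SimpleGraph.mem_neighborSet, lineGraphZ_adj] at hj
  rw [Set.mem_Icc]
  lia

theorem eq_add_zsmul_of_add_eq_two_zsmul {A : Type*} [AddCommGroup A] {f : ℤ → A}
    (hf : ∀ n, f (n + 1) + f (n - 1) = (2 : ℤ) • f n) (n : ℤ) :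
    f n = f 0 + n • (f 1 - f 0) := by
  suffices f n = f 0 + n • (f 1 - f 0) ∧ f (n + 1) = f 0 + (n + 1) • (f 1 - f 0) from this.1
  induction n using Int.induction_on with
  | zero => simp
  | succ n ih =>
    obtain ⟨ih₀, ih₁⟩ := ih
    have h := hf (n + 1)
    rw [add_sub_cancel_right] at h
    refine ⟨ih₁, ?_⟩
    rw [eq_sub_of_add_eq h, ih₁, ih₀]
    module
  | pred n ih =>
    obtain ⟨ih₀, ih₁⟩ := ih
    have h := hf (-n)
    rw [sub_add_cancel]
    refine ⟨?_, ih₀⟩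
    rw [eq_sub_of_add_eq' h, ih₁, ih₀]
    module

theorem add_eq_two_mul_of_injective_of_adj {f : ℤ → ℤ} (hf : Function.Injective f)
    (hadj : ∀ i j, lineGraphZ.Adj i j → lineGraphZ.Adj (f i) (f j)) (n : ℤ) :
    f (n + 1) + f (n - 1) = 2 * f n := by
  have hnext := lineGraphZ_adj.mp (hadj n (n + 1) (lineGraphZ_adj.mpr (by lia)))
  have hprev := lineGraphZ_adj.mp (hadj n (n - 1) (lineGraphZ_adj.mpr (by lia)))
  have hne : f (n + 1) ≠ f (n - 1) := hf.ne (by lia)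
  lia

end LineGraph

section LineAction

open DihedralGroup

/-- The action of `D∞` on `ℤ` by isometries, which identifies `D∞` with the automorphism group of
the line graph. The sign of `i` in `sr i ↦ (x ↦ -i - x)` is forced by the convention
`sr i = sr 0 * r i` for reflections. -/
def lineAction : DihedralGroup 0 →* Equiv.Perm ℤ where
  toFun
    | r i => Equiv.addLeft (i : ℤ)
    | sr i => Equiv.subLeft (-i : ℤ)
  map_one' := Equiv.ext zero_add
  map_mul' := by
    rintro ((i : ℤ) | (i : ℤ)) ((j : ℤ) | (j : ℤ)) <;> ext x
    · exact add_assoc i j x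
    · change -(j - i) - x = i + (-j - x)
      ring
    · change -(i + j) - x = -i - (j + x)
      ring
    · change (j - i) + x = -i - (-j - x)
      ring

theorem lineAction_r (i x : ℤ) : lineAction (r i) x = i + x := rfl

theorem lineAction_sr (i x : ℤ) : lineAction (sr i) x = -i - x := rfl

theorem lineAction_adj (k : DihedralGroup 0) {i j : ℤ} (h : lineGraphZ.Adj i j) :
    lineGraphZ.Adj (lineAction k i) (lineAction k j) := by
  rw [lineGraphZ_adj] at h ⊢
  rcases k with (a : ℤ) | (a : ℤ)
  · rw [lineAction_r, lineAction_r]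
    lia
  · rw [lineAction_sr, lineAction_sr]
    lia

theorem eq_one_of_lineAction_zero_one {k : DihedralGroup 0} (h₀ : lineAction k 0 = 0)
    (h₁ : lineAction k 1 = 1) : k = 1 := by
  rcases k with (a : ℤ) | (a : ℤ)
  · rw [lineAction_r, add_zero] at h₀
    exact congrArg r h₀
  · rw [lineAction_sr] at h₀ h₁
    lia

theorem lineAction_injective : Function.Injective lineAction := by
  refine (injective_iff_map_eq_one lineAction).mpr fun k hk ↦ ?_
  exact eq_one_of_lineAction_zero_one (by rw [hk]; rfl) (by rw [hk]; rfl)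

theorem lineAction_r_sub (i j : ℤ) : lineAction (r (j - i : ℤ)) i = j := by
  rw [lineAction_r, sub_add_cancel]

theorem finite_stabilizer_lineAction (i : ℤ) : {k | lineAction k i = i}.Finite := by
  refine (Set.toFinite {1, sr (-2 * i : ℤ)}).subset ?_
  rintro ((a : ℤ) | (a : ℤ)) (hk : lineAction _ i = i)
  · rw [lineAction_r] at hk
    exact Or.inl (congrArg r (show a = 0 by lia))
  · rw [lineAction_sr] at hk
    exact Or.inr (congrArg sr (show a = -2 * i by lia))

theorem isCayleyAbels_lineAction [TopologicalSpace (DihedralGroup 0)]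
    [DiscreteTopology (DihedralGroup 0)] : IsCayleyAbels lineGraphZ lineAction :=
  ⟨lineGraphZ_connected, finite_neighborSet_lineGraphZ, fun k _ _ ↦ lineAction_adj k,
    fun i j ↦ ⟨_, lineAction_r_sub i j⟩,
    fun i ↦ ⟨(finite_stabilizer_lineAction i).isCompact, isOpen_discrete _⟩⟩

theorem mem_range_lineAction_of_adj {f : Equiv.Perm ℤ}
    (hadj : ∀ i j, lineGraphZ.Adj i j → lineGraphZ.Adj (f i) (f j)) : f ∈ lineAction.range := by
  have affine (n : ℤ) : f n = f 0 + n * (f 1 - f 0) :=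
    eq_add_zsmul_of_add_eq_two_zsmul (add_eq_two_mul_of_injective_of_adj f.injective hadj) n
  have slope := lineGraphZ_adj.mp (hadj 0 1 (lineGraphZ_adj.mpr (by lia)))
  rcases slope with slope | slope
  · refine ⟨r (f 0), Equiv.ext fun n ↦ ?_⟩
    rw [lineAction_r, affine n, slope]
    ring
  · refine ⟨sr (-f 0 : ℤ), Equiv.ext fun n ↦ ?_⟩
    rw [lineAction_sr, affine n, slope]
    ring

end LineAction

section DihedralSubgroups

open DihedralGroup

variable {n : ℕ}

/-- The endomorphism of the dihedral group that multiplies rotations by `d` and sends the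
reflection `sr 0` to `sr c`. As `d` varies, its range runs through the subgroups containing
`sr c`. -/
def dihedralEnd (d c : ZMod n) : DihedralGroup n →* DihedralGroup n where
  toFun
    | r i => r (d * i)
    | sr i => sr (c + d * i)
  map_one' := congrArg r (mul_zero d)
  map_mul' := by
    rintro (i | i) (j | j) <;>
      simp only [r_mul_r, r_mul_sr, sr_mul_r, sr_mul_sr, r.injEq, sr.injEq] <;> ring

theorem dihedralEnd_r (d c i : ZMod n) : dihedralEnd d c (r i) = r (d * i) := rfl

theorem dihedralEnd_sr (d c i : ZMod n) : dihedralEnd d c (sr i) = sr (c + d * i) := rfl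

theorem dihedralEnd_injective {d : ZMod n} (hd : IsLeftRegular d) (c : ZMod n) :
    Function.Injective (dihedralEnd d c) := by
  rintro (i | i) (j | j) hij
  · exact congrArg r (hd (r.inj hij))
  · cases hij
  · cases hij
  · exact congrArg sr (hd (add_left_cancel (sr.inj hij)))

theorem finite_range_dihedralEnd_zero (c : ZMod n) : Finite (dihedralEnd 0 c).range := by
  refine (Set.toFinite {r 0, sr c}).subset ?_
  rintro _ ⟨i | i, rfl⟩ <;> simp [dihedralEnd_r, dihedralEnd_sr]

theorem exists_r_mem_iff_dvd (H : Subgroup (DihedralGroup n)) :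
    ∃ d : ZMod n, ∀ i, r i ∈ H ↔ d ∣ i := by
  let rotations : AddSubgroup (ZMod n) :=
    { carrier := {i | r i ∈ H}
      add_mem' := H.mul_mem
      zero_mem' := H.one_mem
      neg_mem' := H.inv_mem }
  obtain ⟨d, hd⟩ := rotations.isAddCyclic_iff_exists_zmultiples_eq_top.mp inferInstance
  have r_mem_iff (i : ZMod n) : r i ∈ H ↔ ∃ k : ℤ, k • d = i := by
    rw [← AddSubgroup.mem_zmultiples_iff, hd]
    rfl
  refine ⟨d, fun i ↦ (r_mem_iff i).trans ⟨?_, ?_⟩⟩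
  · rintro ⟨k, rfl⟩
    exact ⟨k, by rw [zsmul_eq_mul, mul_comm]⟩
  · rintro ⟨j, rfl⟩
    obtain ⟨k, rfl⟩ := ZMod.intCast_surjective j
    exact ⟨k, by rw [zsmul_eq_mul, mul_comm]⟩

theorem exists_range_dihedralEnd_eq {H : Subgroup (DihedralGroup n)} {c : ZMod n}
    (hc : sr c ∈ H) : ∃ d, (dihedralEnd d c).range = H := by
  obtain ⟨d, hd⟩ := exists_r_mem_iff_dvd H
  have sr_mem_iff (i : ZMod n) : sr i ∈ H ↔ d ∣ i - c := by
    rw [← hd, ← sr_mul_sr, H.mul_mem_cancel_left hc]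
  refine ⟨d, le_antisymm ?_ ?_⟩
  · rintro _ ⟨i | i, rfl⟩
    · rw [dihedralEnd_r, hd]
      exact dvd_mul_right d i
    · rw [dihedralEnd_sr, sr_mem_iff, add_sub_cancel_left]
      exact dvd_mul_right d i
  · rintro (i | i) hi
    · obtain ⟨j, rfl⟩ := (hd i).mp hi
      exact ⟨r j, rfl⟩
    · obtain ⟨j, hj⟩ := (sr_mem_iff i).mp hi
      exact ⟨sr j, by rw [dihedralEnd_sr, ← hj, add_sub_cancel]⟩

theorem isCyclic_of_forall_sr_notMem {H : Subgroup (DihedralGroup n)} (hH : ∀ c, sr c ∉ H) :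
    IsCyclic H := by
  have le_zpowers : H ≤ Subgroup.zpowers (r 1) := by
    rintro (i | i) hi
    · obtain ⟨k, rfl⟩ := ZMod.intCast_surjective i
      exact ⟨k, r_one_zpow k⟩
    · exact absurd hi (hH i)
  exact Subgroup.isCyclic_of_le le_zpowers

theorem nonempty_mulEquiv_int_or_dihedralGroup_of_infinite
    (H : Subgroup (DihedralGroup 0)) [Infinite H] :
    Nonempty (H ≃* Multiplicative ℤ) ∨ Nonempty (H ≃* DihedralGroup 0) := by
  by_cases hH : ∃ c, sr c ∈ H
  · obtain ⟨c, hc⟩ := hH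
    obtain ⟨d, rfl⟩ := exists_range_dihedralEnd_eq hc
    have hd : d ≠ 0 := by
      rintro rfl
      exact not_finite_iff_infinite.mpr ‹_› (finite_range_dihedralEnd_zero c)
    have hreg : IsLeftRegular d := fun i j ↦ mul_left_cancel₀ (M₀ := ℤ) hd
    exact Or.inr ⟨(MonoidHom.ofInjective (dihedralEnd_injective hreg c)).symm⟩
  · have := isCyclic_of_forall_sr_notMem (not_exists.mp hH)
    exact Or.inl ⟨intCyclicMulEquiv.symm⟩

end DihedralSubgroups

section ActionsOnLine

open DihedralGroup

variable {G : Type*} [Group G] {φ : G →* DihedralGroup 0}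

theorem exists_lineAction_comp_eq {ρ : G →* Equiv.Perm ℤ}
    (hadj : ∀ g i j, lineGraphZ.Adj i j → lineGraphZ.Adj (ρ g i) (ρ g j)) :
    ∃ φ, lineAction.comp φ = ρ := by
  let toRange := MonoidHom.ofInjective lineAction_injective
  let ρ' := ρ.codRestrict lineAction.range fun g ↦ mem_range_lineAction_of_adj (hadj g)
  refine ⟨toRange.symm.toMonoidHom.comp ρ', MonoidHom.ext fun g ↦ ?_⟩
  exact MonoidHom.apply_ofInjective_symm lineAction_injective (ρ' g)

theorem coe_ker_eq_stabilizer_inter (φ : G →* DihedralGroup 0) :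
    (φ.ker : Set G) = {g | lineAction.comp φ g 0 = 0} ∩ {g | lineAction.comp φ g 1 = 1} := by
  ext g
  refine ⟨fun hg ↦ ?_, fun hg ↦ eq_one_of_lineAction_zero_one hg.1 hg.2⟩
  have hφ : φ g = 1 := hg
  simp [hφ]

theorem infinite_range_of_lineAction_transitive
    (htrans : ∀ i j, ∃ g, lineAction.comp φ g i = j) : Infinite φ.range := by
  refine Infinite.of_surjective (fun k : φ.range ↦ lineAction k 0) fun i ↦ ?_
  obtain ⟨g, hg⟩ := htrans 0 i
  exact ⟨⟨φ g, g, rfl⟩, hg⟩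

variable [TopologicalSpace G] [IsTopologicalGroup G]

theorem isCayleyAbels_lineAction_comp (hc : IsCompact (φ.ker : Set G))
    (ho : IsOpen (φ.ker : Set G)) (hrot : ∀ i : ℤ, ∃ g, φ g = r i) :
    IsCayleyAbels lineGraphZ (lineAction.comp φ) := by
  let _ : TopologicalSpace (DihedralGroup 0) := ⊥
  have : DiscreteTopology (DihedralGroup 0) := ⟨rfl⟩
  refine isCayleyAbels_lineAction.comp hc ho fun i j ↦ ?_
  obtain ⟨g, hg⟩ := hrot (j - i)
  exact ⟨g, by rw [hg, lineAction_r_sub]⟩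

theorem exists_isCayleyAbels_lineGraphZ_of_surjective_int {ψ : G →* Multiplicative ℤ}
    (hψ : Function.Surjective ψ) (hc : IsCompact (ψ.ker : Set G)) (ho : IsOpen (ψ.ker : Set G)) :
    ∃ ρ : G →* Equiv.Perm ℤ, IsCayleyAbels lineGraphZ ρ := by
  let rotation : Multiplicative ℤ →* DihedralGroup 0 := zpowersHom _ (r 1)
  have rotation_apply (i : ℤ) : rotation (Multiplicative.ofAdd i) = r i := r_one_zpow i
  have rotation_injective : Function.Injective rotation := fun i j hij ↦
    r.inj ((rotation_apply i).symm.trans (hij.trans (rotation_apply j)))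
  have ker_eq : (rotation.comp ψ).ker = ψ.ker := ψ.ker_comp_of_injective rotation rotation_injective
  refine ⟨_, isCayleyAbels_lineAction_comp (φ := rotation.comp ψ) ?_ ?_ fun i ↦ ?_⟩
  · rwa [ker_eq]
  · rwa [ker_eq]
  · obtain ⟨g, hg⟩ := hψ (Multiplicative.ofAdd i)
    exact ⟨g, by rw [MonoidHom.comp_apply, hg, rotation_apply]⟩

end ActionsOnLine

theorem degree_two_CayleyAbels_iff_general (G : Type*) [Group G] [TopologicalSpace G]
    [IsTopologicalGroup G] :
    (∃ ρ : G →* Equiv.Perm ℤ, IsCayleyAbels lineGraphZ ρ) ↔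
      ((∃ φ : G →* Multiplicative ℤ, Function.Surjective φ ∧
          (@Continuous G (Multiplicative ℤ) _ ⊥ φ) ∧
          IsCompact (φ.ker : Set G) ∧ IsOpen (φ.ker : Set G)) ∨
        (∃ φ : G →* DihedralGroup 0, Function.Surjective φ ∧
          (@Continuous G (DihedralGroup 0) _ ⊥ φ) ∧
          IsCompact (φ.ker : Set G) ∧ IsOpen (φ.ker : Set G))) := by
  constructor
  · rintro ⟨ρ, hρ⟩
    have ⟨_, _, hadj, htrans, hstab⟩ := hρ
    obtain ⟨φ, rfl⟩ := exists_lineAction_comp_eq hadj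
    have hc : IsCompact (φ.ker : Set G) :=
      coe_ker_eq_stabilizer_inter φ ▸ hρ.isCompact_stabilizer_inter 0 1
    have ho : IsOpen (φ.ker : Set G) :=
      coe_ker_eq_stabilizer_inter φ ▸ (hstab 0).2.inter (hstab 1).2
    have : Infinite φ.range := infinite_range_of_lineAction_transitive htrans
    rcases nonempty_mulEquiv_int_or_dihedralGroup_of_infinite φ.range with ⟨⟨e⟩⟩ | ⟨⟨e⟩⟩
    · exact Or.inl (exists_surjective_of_range_mulEquiv hc ho e)
    · exact Or.inr (exists_surjective_of_range_mulEquiv hc ho e)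
  · rintro (⟨φ, hφ, -, hc, ho⟩ | ⟨φ, hφ, -, hc, ho⟩)
    · exact exists_isCayleyAbels_lineGraphZ_of_surjective_int hφ hc ho
    · exact ⟨_, isCayleyAbels_lineAction_comp hc ho fun i ↦ hφ (.r i)⟩

/-- For a non-compact, compactly generated t.d.l.c. group `G` the following are equivalent:
(1) the line graph on `ℤ` is a Cayley–Abels graph for `G` (equivalently, `G` has a
Cayley–Abels graph of degree `2`); (2) there is a continuous surjective homomorphism with
compact open kernel from `G` onto the infinite cyclic group `ℤ` or the infinite dihedral
group `D∞`, each taken with the discrete topology. -/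
theorem degree_two_CayleyAbels_iff (G : Type*) [Group G] [TopologicalSpace G]
    [IsTopologicalGroup G] [T2Space G] [TotallyDisconnectedSpace G] [LocallyCompactSpace G]
    (hnc : ¬ CompactSpace G)
    (hcg : ∃ S : Set G, IsCompact S ∧ Subgroup.closure S = ⊤) :
    (∃ ρ : G →* Equiv.Perm ℤ, IsCayleyAbels lineGraphZ ρ) ↔
      ((∃ φ : G →* Multiplicative ℤ, Function.Surjective φ ∧
          (@Continuous G (Multiplicative ℤ) _ ⊥ φ) ∧
          IsCompact (φ.ker : Set G) ∧ IsOpen (φ.ker : Set G)) ∨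
        (∃ φ : G →* DihedralGroup 0, Function.Surjective φ ∧
          (@Continuous G (DihedralGroup 0) _ ⊥ φ) ∧
          IsCompact (φ.ker : Set G) ∧ IsOpen (φ.ker : Set G))) :=
  degree_two_CayleyAbels_iff_general G
end

section
/- Let G be a t.d.l.c. group, K a compact open normal subgroup of G, and Γ a Cayley–Abels graph for G of degree d. Form the quotient graph Γ/K whose vertices are the K-orbits on the vertices of Γ, with two distinct orbits A ≠ B adjacent if and only if some vertex in A is adjacent in Γ to some vertex in B, equipped with the induced action of G. Then Γ/K is a Cayley–Abels graph for G of degree at most d, and the kernel of the action of G on Γ/K is a compact open normal subgroup of G. -/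
/-- The setoid on the vertex set whose classes are the orbits of the subgroup `K`,
acting through `ρ`. -/
def orbitSetoid {G V : Type*} [Group G] (ρ : G →* Equiv.Perm V) (K : Subgroup G) :
    Setoid V where
  r v w := ∃ k ∈ K, ρ k v = w
  iseqv := by
    constructor
    · intro v
      exact ⟨1, one_mem K, by simp⟩
    · rintro v w ⟨k, hk, rfl⟩
      refine ⟨k⁻¹, inv_mem hk, ?_⟩
      simp
    · rintro u v w ⟨k, hk, rfl⟩ ⟨l, hl, rfl⟩
      exact ⟨l * k, mul_mem hl hk, by simp⟩

/-- The quotient graph of a simple graph by an equivalence relation on its vertices: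
two distinct classes are adjacent iff some element of one is adjacent to some element of
the other. -/
def quotientGraph {V : Type*} (Γ : SimpleGraph V) (s : Setoid V) :
    SimpleGraph (Quotient s) where
  Adj A B := A ≠ B ∧ ∃ a b : V, Quotient.mk s a = A ∧ Quotient.mk s b = B ∧ Γ.Adj a b
  symm := by
    constructor
    rintro A B ⟨hne, a, b, ha, hb, hab⟩
    exact ⟨hne.symm, b, a, hb, ha, hab.symm⟩
  loopless := by
    constructor
    rintro A ⟨hne, -⟩
    exact hne rfl

/-!
The stabilizer in `G` of the orbit `K v` is `K * G_v`, a product of a compact set with a compact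
open one, so it is compact and open. Since `K` acts by automorphisms, every neighbour of the orbit
`K v` already contains a neighbour of `v`, which bounds the degree. The kernel of the action on
`Γ/K` contains the open subgroup `K`, and it is a closed subset of a compact vertex stabilizer.
-/

open scoped Pointwise

section QuotientGraph

variable {V : Type*} {Γ : SimpleGraph V} (s : Setoid V)

theorem quotientGraph_reachable_mk_of_adj {u v : V} (huv : Γ.Adj u v) :
    (quotientGraph Γ s).Reachable (Quotient.mk s u) (Quotient.mk s v) := by
  by_cases hmk : Quotient.mk s u = Quotient.mk s v
  · rw [hmk]
  · exact SimpleGraph.Adj.reachable ⟨hmk, u, v, rfl, rfl, huv⟩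

theorem quotientGraph_reachable_mk {u v : V} (huv : Γ.Reachable u v) :
    (quotientGraph Γ s).Reachable (Quotient.mk s u) (Quotient.mk s v) := by
  obtain ⟨p⟩ := huv
  induction p with
  | nil => rfl
  | cons hadj _ ih => exact (quotientGraph_reachable_mk_of_adj s hadj).trans ih

theorem quotientGraph_connected (hΓ : Γ.Connected) : (quotientGraph Γ s).Connected where
  preconnected := Quotient.ind₂ fun u v ↦ quotientGraph_reachable_mk s (hΓ.preconnected u v)
  nonempty := hΓ.nonempty.map (Quotient.mk s)

end QuotientGraph

section OrbitNeighbors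

variable {G V : Type*} [Group G] {ρ : G →* Equiv.Perm V} {K : Subgroup G} {Γ : SimpleGraph V}

theorem orbitSetoid_mk_eq_mk_iff {u v : V} :
    Quotient.mk (orbitSetoid ρ K) u = Quotient.mk (orbitSetoid ρ K) v ↔ ∃ k ∈ K, ρ k u = v :=
  Quotient.eq (r := orbitSetoid ρ K)

theorem orbitSetoid_mk_apply {k : G} (hk : k ∈ K) (v : V) :
    Quotient.mk (orbitSetoid ρ K) (ρ k v) = Quotient.mk (orbitSetoid ρ K) v :=
  (orbitSetoid_mk_eq_mk_iff.2 ⟨k, hk, rfl⟩).symm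

theorem quotientGraph_neighborSet_mk_subset
    (hK : ∀ k ∈ K, ∀ u v, Γ.Adj u v → Γ.Adj (ρ k u) (ρ k v)) (v : V) :
    (quotientGraph Γ (orbitSetoid ρ K)).neighborSet (Quotient.mk _ v) ⊆
      Quotient.mk (orbitSetoid ρ K) '' Γ.neighborSet v := by
  rintro _ ⟨-, a, b, ha, rfl, hab⟩
  obtain ⟨k, hk, rfl⟩ := orbitSetoid_mk_eq_mk_iff.1 ha
  exact ⟨ρ k b, hK k hk a b hab, orbitSetoid_mk_apply hk b⟩

theorem quotientGraph_neighborSet_mk_finite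
    (hK : ∀ k ∈ K, ∀ u v, Γ.Adj u v → Γ.Adj (ρ k u) (ρ k v)) {v : V}
    (hv : (Γ.neighborSet v).Finite) :
    ((quotientGraph Γ (orbitSetoid ρ K)).neighborSet (Quotient.mk _ v)).Finite :=
  (hv.image _).subset (quotientGraph_neighborSet_mk_subset hK v)

theorem quotientGraph_ncard_neighborSet_mk_le
    (hK : ∀ k ∈ K, ∀ u v, Γ.Adj u v → Γ.Adj (ρ k u) (ρ k v)) {v : V}
    (hv : (Γ.neighborSet v).Finite) :
    ((quotientGraph Γ (orbitSetoid ρ K)).neighborSet (Quotient.mk _ v)).ncard ≤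
      (Γ.neighborSet v).ncard :=
  (Set.ncard_le_ncard (quotientGraph_neighborSet_mk_subset hK v) (hv.image _)).trans
    (Set.ncard_image_le hv)

end OrbitNeighbors

section QuotientAction

variable {G V : Type*} [Group G] (ρ : G →* Equiv.Perm V) (K : Subgroup G) [K.Normal]

theorem orbitSetoid_apply_apply (g : G) {u v : V} (huv : orbitSetoid ρ K u v) :
    orbitSetoid ρ K (ρ g u) (ρ g v) := by
  obtain ⟨k, hk, rfl⟩ := huv
  exact ⟨g * k * g⁻¹, Subgroup.Normal.conj_mem ‹K.Normal› k hk g, by simp⟩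

/-- The action of `G` on the set of orbits of a normal subgroup `K` induced by the action `ρ`,
as a permutation representation. -/
def orbitPermHom : G →* Equiv.Perm (Quotient (orbitSetoid ρ K)) :=
  MonoidHom.toHomPerm
    { toFun := fun g ↦ Quotient.map (ρ g) fun _ _ ↦ orbitSetoid_apply_apply ρ K g
      map_one' := funext <| Quotient.ind fun v ↦ congrArg (Quotient.mk _) (by simp)
      map_mul' := fun g h ↦ funext <| Quotient.ind fun v ↦ congrArg (Quotient.mk _) (by simp) }

theorem orbitPermHom_apply_mk (g : G) (v : V) :
    orbitPermHom ρ K g (Quotient.mk _ v) = Quotient.mk _ (ρ g v) :=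
  rfl

theorem le_ker_orbitPermHom : K ≤ (orbitPermHom ρ K).ker := fun _ hk ↦
  Equiv.ext <| Quotient.ind fun v ↦ orbitSetoid_mk_apply hk v

theorem setOf_orbitPermHom_apply_mk_eq_self (v : V) :
    {g : G | orbitPermHom ρ K g (Quotient.mk _ v) = Quotient.mk _ v} =
      (K : Set G) * {g : G | ρ g v = v} := by
  ext g
  rw [Set.mem_ofPred_eq, orbitPermHom_apply_mk, orbitSetoid_mk_eq_mk_iff, Set.mem_mul]
  constructor
  · rintro ⟨k, hk, hkg⟩
    exact ⟨k⁻¹, inv_mem hk, k * g, by simpa using hkg, by simp⟩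
  · rintro ⟨k, hk, h, hh : ρ h v = v, rfl⟩
    exact ⟨k⁻¹, inv_mem hk, by simp [hh]⟩

theorem exists_orbitPermHom_apply_eq (hρ : ∀ u v, ∃ g, ρ g u = v)
    (A B : Quotient (orbitSetoid ρ K)) : ∃ g, orbitPermHom ρ K g A = B := by
  induction A, B using Quotient.inductionOn₂ with | _ u v
  obtain ⟨g, rfl⟩ := hρ u v
  exact ⟨g, orbitPermHom_apply_mk ρ K g u⟩

variable {ρ} in
theorem quotientGraph_adj_orbitPermHom {Γ : SimpleGraph V} {g : G}
    (hg : ∀ u v, Γ.Adj u v → Γ.Adj (ρ g u) (ρ g v)) {A B : Quotient (orbitSetoid ρ K)}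
    (hAB : (quotientGraph Γ (orbitSetoid ρ K)).Adj A B) :
    (quotientGraph Γ (orbitSetoid ρ K)).Adj (orbitPermHom ρ K g A) (orbitPermHom ρ K g B) := by
  obtain ⟨hne, a, b, rfl, rfl, hab⟩ := hAB
  exact ⟨(orbitPermHom ρ K g).injective.ne hne, ρ g a, ρ g b, rfl, rfl, hg a b hab⟩

end QuotientAction

namespace IsCayleyAbels

variable {G V : Type*} [Group G] [TopologicalSpace G] [ContinuousMul G]
  {Γ : SimpleGraph V} {ρ : G →* Equiv.Perm V}

theorem isClosed_ker (hCA : IsCayleyAbels Γ ρ) : IsClosed (ρ.ker : Set G) := by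
  obtain ⟨-, -, -, -, hstab⟩ := hCA
  have ker_eq_iInter : (ρ.ker : Set G) = ⋂ v, {g | ρ g v = v} := by
    ext g
    simp [MonoidHom.mem_ker, Equiv.ext_iff]
  rw [ker_eq_iInter]
  exact isClosed_iInter fun v ↦
    ((MulAction.stabilizer (Equiv.Perm V) v).comap ρ).isClosed_of_isOpen (hstab v).2

theorem isCompact_ker (hCA : IsCayleyAbels Γ ρ) : IsCompact (ρ.ker : Set G) := by
  have ker_isClosed := hCA.isClosed_ker
  obtain ⟨hconn, -, -, -, hstab⟩ := hCA
  obtain ⟨v⟩ := hconn.nonempty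
  exact (hstab v).1.of_isClosed_subset ker_isClosed fun _ hg ↦ Equiv.congr_fun hg v

theorem quotient (hCA : IsCayleyAbels Γ ρ) {K : Subgroup G} [K.Normal]
    (hKc : IsCompact (K : Set G)) :
    IsCayleyAbels (quotientGraph Γ (orbitSetoid ρ K)) (orbitPermHom ρ K) := by
  obtain ⟨hconn, hfin, hadj, htrans, hstab⟩ := hCA
  refine ⟨quotientGraph_connected _ hconn, Quotient.ind fun v ↦ ?_,
    fun g _ _ ↦ quotientGraph_adj_orbitPermHom K (hadj g),
    exists_orbitPermHom_apply_eq ρ K htrans, Quotient.ind fun v ↦ ?_⟩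
  · exact quotientGraph_neighborSet_mk_finite (fun k _ ↦ hadj k) (hfin v)
  · rw [setOf_orbitPermHom_apply_mk_eq_self]
    exact ⟨hKc.mul (hstab v).1, (hstab v).2.mul_left⟩

end IsCayleyAbels

theorem quotient_CayleyAbels_compact_open_normal_general {G V : Type*} [Group G]
    [TopologicalSpace G] [ContinuousMul G]
    (K : Subgroup G) (hKn : K.Normal) (hKc : IsCompact (K : Set G))
    (hKo : IsOpen (K : Set G))
    (Γ : SimpleGraph V) (ρ : G →* Equiv.Perm V) (hCA : IsCayleyAbels Γ ρ)
    (d : ℕ) (hdeg : ∀ v : V, (Γ.neighborSet v).ncard = d) :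
    ∃ σ : G →* Equiv.Perm (Quotient (orbitSetoid ρ K)),
      (∀ (g : G) (v : V),
          σ g (Quotient.mk (orbitSetoid ρ K) v) = Quotient.mk (orbitSetoid ρ K) (ρ g v)) ∧
      IsCayleyAbels (quotientGraph Γ (orbitSetoid ρ K)) σ ∧
      (∀ A : Quotient (orbitSetoid ρ K),
          ((quotientGraph Γ (orbitSetoid ρ K)).neighborSet A).ncard ≤ d) ∧
      σ.ker.Normal ∧ IsCompact (σ.ker : Set G) ∧ IsOpen (σ.ker : Set G) := by
  have quotient_isCayleyAbels := hCA.quotient hKc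
  obtain ⟨-, hfin, hadj, -, -⟩ := hCA
  refine ⟨orbitPermHom ρ K, orbitPermHom_apply_mk ρ K, quotient_isCayleyAbels,
    Quotient.ind fun v ↦ ?_, inferInstance, quotient_isCayleyAbels.isCompact_ker,
    Subgroup.isOpen_mono (le_ker_orbitPermHom ρ K) hKo⟩
  exact (quotientGraph_ncard_neighborSet_mk_le (fun k _ ↦ hadj k) (hfin v)).trans_eq (hdeg v)

/-- Let `G` be a t.d.l.c. group, `K` a compact open normal subgroup and `Γ` a Cayley–Abels
graph for `G` of degree `d`.  Then the quotient graph `Γ/K` (on the `K`-orbits), with the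
induced `G`-action, is a Cayley–Abels graph for `G` of degree at most `d`, and the kernel
of the action of `G` on `Γ/K` is a compact open normal subgroup of `G`. -/
theorem quotient_CayleyAbels_compact_open_normal {G V : Type*} [Group G]
    [TopologicalSpace G] [IsTopologicalGroup G] [T2Space G] [TotallyDisconnectedSpace G]
    [LocallyCompactSpace G]
    (K : Subgroup G) (hKn : K.Normal) (hKc : IsCompact (K : Set G))
    (hKo : IsOpen (K : Set G))
    (Γ : SimpleGraph V) (ρ : G →* Equiv.Perm V) (hCA : IsCayleyAbels Γ ρ)
    (d : ℕ) (hdeg : ∀ v : V, (Γ.neighborSet v).ncard = d) :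
    ∃ σ : G →* Equiv.Perm (Quotient (orbitSetoid ρ K)),
      (∀ (g : G) (v : V),
          σ g (Quotient.mk (orbitSetoid ρ K) v) = Quotient.mk (orbitSetoid ρ K) (ρ g v)) ∧
      IsCayleyAbels (quotientGraph Γ (orbitSetoid ρ K)) σ ∧
      (∀ A : Quotient (orbitSetoid ρ K),
          ((quotientGraph Γ (orbitSetoid ρ K)).neighborSet A).ncard ≤ d) ∧
      σ.ker.Normal ∧ IsCompact (σ.ker : Set G) ∧ IsOpen (σ.ker : Set G) :=
  quotient_CayleyAbels_compact_open_normal_general K hKn hKc hKo Γ ρ hCA d hdeg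
end

section
/- Let G be a non-compact, compactly generated t.d.l.c. group with modular function Δ, and let H be the image of Δ (a subgroup of the multiplicative group of positive reals, consisting of positive rationals). Then for every Cayley–Abels graph Γ for G, of degree d, there exist k ≥ 1 and positive integers p_1, …, p_k, q_1, …, q_k such that the subgroup of the positive reals generated by p_1/q_1, …, p_k/q_k equals H and p_1 + q_1 + ⋯ + p_k + q_k ≤ d. (Equivalently, the degree of every Cayley–Abels graph of G is at least min{ Σ_{i=1}^k (p_i + q_i) : the p_i/q_i generate H }.) -/
open MeasureTheory
open scoped NNReal ENNReal

/-!
Fix a vertex `v` with stabilizer `U`. As `U` has finite positive measure, `Δ` is trivial on `U`, so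
`g • v ↦ Δ g` is a well-defined modulus on the vertices. Let `n x` be the number of neighbours of
`v` of modulus `x`. The set `{g | g • v is a neighbour of v of modulus x}` is a union of `n x` left
cosets of `U`, each of measure `x * μ U`; its elements are the inverses of those moving `v` to a
neighbour of modulus `x⁻¹`, so it is also a union of `n x⁻¹` right cosets, each of measure `μ U`.
Hence `x = n x⁻¹ / n x`. By connectedness the moduli of the neighbours generate the image of `Δ`,
and so do those exceeding `1`; the fibres over `x` and `x⁻¹` for `x > 1` are disjoint, so their
sizes add up to at most the degree. If no modulus exceeds `1`, the image of `Δ` is trivial and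
`1 / 1` serves, because the degree is at least `2` when `G` is not compact.
-/

open MulAction
open scoped Finset

section OrderedGroup

variable {α : Type*} [CommGroup α] [LinearOrder α] [IsOrderedMonoid α]

lemma closure_setOf_one_lt_eq_closure {S : Set α} (hS : ∀ x ∈ S, x⁻¹ ∈ S) :
    Subgroup.closure {x ∈ S | 1 < x} = Subgroup.closure S := by
  refine le_antisymm (Subgroup.closure_mono fun x hx => hx.1) ?_
  rw [Subgroup.closure_le]
  intro x hx
  rcases lt_trichotomy x 1 with hlt | rfl | hgt
  · have hinv : x⁻¹ ∈ {y ∈ S | 1 < y} := ⟨hS x hx, one_lt_inv'.2 hlt⟩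
    exact inv_mem_iff.1 (Subgroup.subset_closure hinv)
  · exact one_mem _
  · exact Subgroup.subset_closure ⟨hx, hgt⟩

lemma sum_one_lt_inv_add_le_sum {M : Type*} [AddCommMonoid M] [PartialOrder M]
    [CanonicallyOrderedAdd M] {S : Finset α} (hS : ∀ x ∈ S, x⁻¹ ∈ S)
    (f : α → M) : ∑ x ∈ S with 1 < x, (f x⁻¹ + f x) ≤ ∑ x ∈ S, f x := by
  have hdisj : Disjoint {x ∈ S | x < 1} {x ∈ S | 1 < x} :=
    Finset.disjoint_filter.2 fun x _ hlt => hlt.not_gt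
  calc ∑ x ∈ S with 1 < x, (f x⁻¹ + f x)
      = ∑ x ∈ S with x < 1, f x + ∑ x ∈ S with 1 < x, f x := by
        rw [Finset.sum_add_distrib]
        congr 1
        refine Finset.sum_nbij' (·⁻¹) (·⁻¹) ?_ ?_ ?_ ?_ ?_ <;> simp +contextual [hS]
    _ = ∑ x ∈ ({x ∈ S | x < 1} ∪ {x ∈ S | 1 < x} : Finset α), f x :=
        (Finset.sum_union hdisj).symm
    _ ≤ ∑ x ∈ S, f x := Finset.sum_le_sum_of_subset
        (Finset.union_subset (Finset.filter_subset _ _) (Finset.filter_subset _ _))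

end OrderedGroup

section RatioGenerators

/-- The group `H` of positive reals is generated by a nonempty finite family of fractions
`p i / q i` of positive integers whose numerators and denominators sum to at most `d`. -/
def IsGeneratedByRatios (H : Subgroup ℝ≥0ˣ) (d : ℕ) : Prop :=
  ∃ k : ℕ, 1 ≤ k ∧ ∃ p q : Fin k → ℕ, (∀ i, 0 < p i) ∧ (∀ i, 0 < q i) ∧
    Subgroup.closure {x : ℝ≥0ˣ | ∃ i : Fin k, (x : ℝ≥0) = (p i : ℝ≥0) / (q i : ℝ≥0)} = H ∧
    ∑ i : Fin k, (p i + q i) ≤ d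

lemma isGeneratedByRatios_closure {T : Finset ℝ≥0ˣ} (hT : T.Nonempty) {p q : ℝ≥0ˣ → ℕ}
    (hp : ∀ x ∈ T, 0 < p x) (hq : ∀ x ∈ T, 0 < q x)
    (hpq : ∀ x ∈ T, (x : ℝ≥0) = (p x : ℝ≥0) / (q x : ℝ≥0)) {d : ℕ}
    (hd : ∑ x ∈ T, (p x + q x) ≤ d) :
    IsGeneratedByRatios (Subgroup.closure (T : Set ℝ≥0ˣ)) d := by
  let e : Fin #T ≃ T := T.equivFin.symm
  refine ⟨#T, hT.card_pos, fun i => p (e i), fun i => q (e i), fun i => hp _ (e i).2,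
    fun i => hq _ (e i).2, ?_, ?_⟩
  · congr 1
    ext x
    refine ⟨?_, fun hx => ⟨e.symm ⟨x, hx⟩, by simpa using hpq x hx⟩⟩
    rintro ⟨i, hi⟩
    rw [← hpq _ (e i).2, Units.val_inj] at hi
    exact hi ▸ (e i).2
  · rwa [e.sum_comp fun x : T => p x + q x, Finset.sum_coe_sort T fun x => p x + q x]

lemma isGeneratedByRatios_bot {d : ℕ} (hd : 2 ≤ d) : IsGeneratedByRatios ⊥ d := by
  have h := isGeneratedByRatios_closure (T := {1}) (p := 1) (q := 1) (d := d)
    (Finset.singleton_nonempty 1) (by simp) (by simp) (by simp) (by simpa using hd)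
  rwa [Finset.coe_singleton, Subgroup.closure_singleton_one] at h

variable {ι : Type*} {N : Finset ι} {f : ι → ℝ≥0ˣ}

lemma inv_mem_image_of_card_fiber_inv
    (hf : ∀ x : ℝ≥0ˣ, (#{i ∈ N | f i = x⁻¹} : ℝ≥0) = x * #{i ∈ N | f i = x}) {x : ℝ≥0ˣ}
    (hx : x ∈ N.image f) : x⁻¹ ∈ N.image f := by
  rw [← Finset.fiber_card_ne_zero_iff_mem_image] at hx ⊢
  have hne : (#{i ∈ N | f i = x⁻¹} : ℝ≥0) ≠ 0 := by
    rw [hf]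
    exact mul_ne_zero x.ne_zero (Nat.cast_ne_zero.2 hx)
  exact Nat.cast_ne_zero.1 hne

lemma isGeneratedByRatios_closure_image
    (hf : ∀ x : ℝ≥0ˣ, (#{i ∈ N | f i = x⁻¹} : ℝ≥0) = x * #{i ∈ N | f i = x}) (hN : 2 ≤ #N) :
    IsGeneratedByRatios (Subgroup.closure (f '' N)) #N := by
  have hinv : ∀ x ∈ N.image f, x⁻¹ ∈ N.image f := fun _ => inv_mem_image_of_card_fiber_inv hf
  have hclosure : Subgroup.closure (({x ∈ N.image f | 1 < x} : Finset ℝ≥0ˣ) : Set ℝ≥0ˣ) =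
      Subgroup.closure (f '' N) := by
    rw [← Finset.coe_image, Finset.coe_filter]
    exact closure_setOf_one_lt_eq_closure hinv
  have hpos : ∀ x ∈ N.image f, 0 < #{i ∈ N | f i = x} := fun x hx =>
    Nat.pos_of_ne_zero ((Finset.fiber_card_ne_zero_iff_mem_image N f x).2 hx)
  rw [← hclosure]
  rcases ({x ∈ N.image f | 1 < x} : Finset ℝ≥0ˣ).eq_empty_or_nonempty with hempty | hnonempty
  · rw [hempty, Finset.coe_empty, Subgroup.closure_empty]
    exact isGeneratedByRatios_bot hN
  · refine isGeneratedByRatios_closure hnonempty (p := fun x => #{i ∈ N | f i = x⁻¹})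
      (q := fun x => #{i ∈ N | f i = x}) (fun x hx => hpos _ (hinv x (Finset.mem_filter.1 hx).1))
      (fun x hx => hpos x (Finset.mem_filter.1 hx).1) (fun x hx => ?_) ?_
    · have hne : (#{i ∈ N | f i = x} : ℝ≥0) ≠ 0 :=
        Nat.cast_ne_zero.2 (hpos x (Finset.mem_filter.1 hx).1).ne'
      rw [hf, mul_div_cancel_right₀ _ hne]
    · rw [Finset.card_eq_sum_card_image f N]
      exact sum_one_lt_inv_add_le_sum hinv fun x => #{i ∈ N | f i = x}

end RatioGenerators

section StabilizerCosets

variable {G V : Type*} [Group G] [MulAction G V]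

lemma smul_preimage_singleton_eq_image_stabilizer (g : G) (v : V) :
    (fun h : G => h • v) ⁻¹' {g • v} = (fun h => g * h) '' (stabilizer G v : Set G) := by
  ext h
  simp [Set.image_mul_left, mul_smul, inv_smul_eq_iff]

lemma inv_smul_preimage_singleton_eq_preimage_stabilizer (g : G) (v : V) :
    (fun h : G => h⁻¹ • v) ⁻¹' {g • v} = (fun h => h * g) ⁻¹' (stabilizer G v : Set G) := by
  ext h
  simp [mul_smul, inv_smul_eq_iff, eq_comm (a := v)]

lemma compactSpace_of_finite_of_isCompact_stabilizer [TopologicalSpace G] [ContinuousMul G]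
    [Finite V] {v : V} (hv : IsCompact (stabilizer G v : Set G)) : CompactSpace G := by
  have hfiber : ∀ w : V, IsCompact ((fun h : G => h • v) ⁻¹' {w}) := by
    intro w
    rcases ((fun h : G => h • v) ⁻¹' {w}).eq_empty_or_nonempty with hempty | ⟨g, rfl⟩
    · exact hempty ▸ isCompact_empty
    · rw [smul_preimage_singleton_eq_image_stabilizer]
      exact hv.image (continuous_const_mul g)
  constructor
  rw [← Set.preimage_univ (f := fun h : G => h • v), ← Set.iUnion_of_singleton, Set.preimage_iUnion]
  exact isCompact_iUnion hfiber

end StabilizerCosets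

section GraphActions

lemma finite_of_connected_of_subsingleton_neighborSet {V : Type*} {Γ : SimpleGraph V}
    (hΓ : Γ.Connected) (hsub : ∀ v, (Γ.neighborSet v).Subsingleton) : Finite V := by
  obtain ⟨v⟩ := hΓ.nonempty
  have hball : ∀ u, u ∈ insert v (Γ.neighborSet v) := by
    intro u
    induction (SimpleGraph.reachable_iff_reflTransGen v u).1 (hΓ.preconnected v u) with
    | refl => exact Set.mem_insert v _
    | @tail a b _ hab ih =>
      rcases ih with rfl | hva
      · exact Or.inr hab
      · exact Or.inl (hsub a hab hva.symm)
  exact Set.finite_univ_iff.1 (((hsub v).finite.insert v).subset fun u _ => hball u)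

variable {G V : Type*} [Group G] [MulAction G V] {Γ : SimpleGraph V}

lemma two_le_ncard_neighborSet_of_not_compactSpace [TopologicalSpace G] [ContinuousMul G]
    (hG : ¬ CompactSpace G) (hΓ : Γ.Connected) (hfin : ∀ v, (Γ.neighborSet v).Finite) {d : ℕ}
    (hd : ∀ v, (Γ.neighborSet v).ncard = d) {v : V}
    (hv : IsCompact (stabilizer G v : Set G)) : 2 ≤ d := by
  by_contra! hlt
  have hsub : ∀ u, (Γ.neighborSet u).Subsingleton := fun u =>
    have := (hfin u).to_subtype
    Set.ncard_le_one_iff_subsingleton.1 (by rw [hd u]; lia)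
  have := finite_of_connected_of_subsingleton_neighborSet hΓ hsub
  exact hG (compactSpace_of_finite_of_isCompact_stabilizer hv)

lemma adj_inv_smul_of_adj_smul
    (hadj : ∀ (g : G) (u w : V), Γ.Adj u w → Γ.Adj (g • u) (g • w)) {g : G} {v : V}
    (h : Γ.Adj v (g • v)) : Γ.Adj v (g⁻¹ • v) := by
  simpa only [inv_smul_smul] using (hadj g⁻¹ _ _ h).symm

lemma closure_stabilizer_union_adj_eq_top [IsPretransitive G V] (hΓ : Γ.Connected)
    (hadj : ∀ (g : G) (u w : V), Γ.Adj u w → Γ.Adj (g • u) (g • w)) (v : V) :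
    Subgroup.closure ((stabilizer G v : Set G) ∪ {g : G | Γ.Adj v (g • v)}) = ⊤ := by
  set H := Subgroup.closure ((stabilizer G v : Set G) ∪ {g : G | Γ.Adj v (g • v)})
  have hmem : ∀ u (g : G), g • v = u → g ∈ H := by
    intro u
    induction (SimpleGraph.reachable_iff_reflTransGen v u).1 (hΓ.preconnected v u) with
    | refl => exact fun g hg => Subgroup.subset_closure (Or.inl hg)
    | @tail a b _ hab ih =>
      rintro g rfl
      obtain ⟨h, rfl⟩ := exists_smul_eq G v a
      have hstep : Γ.Adj v ((h⁻¹ * g) • v) := by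
        simpa [mul_smul] using hadj h⁻¹ _ _ hab
      simpa using mul_mem (ih h rfl) (Subgroup.subset_closure (Or.inr hstep))
  exact (Subgroup.eq_top_iff' H).2 fun g => hmem _ g rfl

end GraphActions

section OrbitModulus

variable {G V M : Type*} [Group G] [MulAction G V] [Group M]

/-- The function `g • v ↦ Δ g` on the orbit of `v`, which descends the homomorphism `Δ` along the
orbit map when `Δ` is trivial on the stabilizer of `v`. Off the orbit its value is `1`. -/
noncomputable def orbitModulus (Δ : G →* M) (v : V) : V → M :=
  Function.extend (fun g : G => g • v) Δ (fun _ => 1)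

variable {Δ : G →* M} {v : V}

lemma orbitModulus_smul (hΔ : ∀ g ∈ stabilizer G v, Δ g = 1) (g : G) :
    orbitModulus Δ v (g • v) = Δ g := by
  refine Function.FactorsThrough.extend_apply (f := fun g : G => g • v) ?_ (fun _ => 1) g
  intro a b hab
  have hmem : a⁻¹ * b ∈ stabilizer G v := by
    rw [mem_stabilizer_iff, mul_smul, inv_smul_eq_iff]
    exact hab.symm
  have hone : (Δ a)⁻¹ * Δ b = 1 := by rw [← map_inv, ← map_mul, hΔ _ hmem]
  exact inv_mul_eq_one.1 hone

lemma closure_orbitModulus_neighborSet_eq_range [IsPretransitive G V] {Γ : SimpleGraph V}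
    (hΓ : Γ.Connected) (hadj : ∀ (g : G) (u w : V), Γ.Adj u w → Γ.Adj (g • u) (g • w))
    (hΔ : ∀ g ∈ stabilizer G v, Δ g = 1) :
    Subgroup.closure (orbitModulus Δ v '' Γ.neighborSet v) = Δ.range := by
  refine le_antisymm ((Subgroup.closure_le _).2 ?_) ?_
  · rintro _ ⟨w, -, rfl⟩
    obtain ⟨g, rfl⟩ := exists_smul_eq G v w
    exact ⟨g, (orbitModulus_smul hΔ g).symm⟩
  · rw [MonoidHom.range_eq_map, ← closure_stabilizer_union_adj_eq_top hΓ hadj v,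
      MonoidHom.map_closure, Subgroup.closure_le]
    rintro _ ⟨g, hg | hg, rfl⟩
    · rw [hΔ g hg]
      exact one_mem _
    · exact Subgroup.subset_closure ⟨g • v, hg, orbitModulus_smul hΔ g⟩

end OrbitModulus

section ModularFunction

variable {G V : Type*} [Group G] [MeasurableSpace G] {μ : Measure G} {Δ : G →* ℝ≥0ˣ}

/-- `Δ` describes how left translations scale the measure `μ`; for a right Haar measure `μ` this
characterizes the modular function. -/
def IsModularFunction (μ : Measure G) (Δ : G →* ℝ≥0ˣ) : Prop :=
  ∀ (g : G) (A : Set G), MeasurableSet A →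
    μ ((fun x => g * x) '' A) = ((Δ g : ℝ≥0) : ℝ≥0∞) * μ A

namespace IsModularFunction

lemma eq_one_of_mem (hΔ : IsModularFunction μ Δ) {U : Subgroup G}
    (hmeas : MeasurableSet (U : Set G)) (hne_zero : μ U ≠ 0) (hne_top : μ U ≠ ∞) {g : G}
    (hg : g ∈ U) : Δ g = 1 := by
  have himage : (fun x => g * x) '' (U : Set G) = U := by
    rw [Set.image_mul_left]
    ext x
    simp [U.mul_mem_cancel_left (inv_mem hg)]
  have hscale : 1 * μ U = ((Δ g : ℝ≥0) : ℝ≥0∞) * μ U := by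
    rw [← hΔ g U hmeas, himage, one_mul]
  rw [ENNReal.mul_left_inj hne_zero hne_top] at hscale
  exact Units.val_eq_one.1 (ENNReal.coe_eq_one.1 hscale.symm)

variable [MulAction G V] [IsPretransitive G V] {v : V}

lemma measure_smul_preimage [MeasurableMul G] (hΔ : IsModularFunction μ Δ)
    (hmeas : MeasurableSet (stabilizer G v : Set G)) (hstab : ∀ g ∈ stabilizer G v, Δ g = 1)
    {S : Finset V} {x : ℝ≥0ˣ} (hS : ∀ w ∈ S, orbitModulus Δ v w = x) :
    μ ((fun g : G => g • v) ⁻¹' S) = #S * (x : ℝ≥0) * μ (stabilizer G v) := by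
  rw [← sum_measure_preimage_singleton, mul_assoc, ← nsmul_eq_mul]
  · refine Finset.sum_eq_card_nsmul fun w hw => ?_
    obtain ⟨g, rfl⟩ := exists_smul_eq G v w
    rw [smul_preimage_singleton_eq_image_stabilizer, hΔ g _ hmeas, ← hS _ hw,
      orbitModulus_smul hstab]
  · intro w _
    obtain ⟨g, rfl⟩ := exists_smul_eq G v w
    rw [smul_preimage_singleton_eq_image_stabilizer, Set.image_mul_left]
    exact measurable_const_mul _ hmeas

end IsModularFunction

variable [MulAction G V] [IsPretransitive G V] {v : V} [MeasurableMul G] [μ.IsMulRightInvariant]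

lemma measure_inv_smul_preimage (hmeas : MeasurableSet (stabilizer G v : Set G)) (S : Finset V) :
    μ ((fun g : G => g⁻¹ • v) ⁻¹' S) = #S * μ (stabilizer G v) := by
  rw [← sum_measure_preimage_singleton, ← nsmul_eq_mul]
  · refine Finset.sum_eq_card_nsmul fun w _ => ?_
    obtain ⟨g, rfl⟩ := exists_smul_eq G v w
    rw [inv_smul_preimage_singleton_eq_preimage_stabilizer, measure_preimage_mul_right]
  · intro w _
    obtain ⟨g, rfl⟩ := exists_smul_eq G v w
    rw [inv_smul_preimage_singleton_eq_preimage_stabilizer]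
    exact measurable_mul_const g hmeas

lemma IsModularFunction.card_orbitModulus_fiber_inv (hΔ : IsModularFunction μ Δ)
    (hmeas : MeasurableSet (stabilizer G v : Set G)) (hne_zero : μ (stabilizer G v) ≠ 0)
    (hne_top : μ (stabilizer G v) ≠ ∞) {N : Finset V}
    (hN : ∀ g : G, g • v ∈ N → g⁻¹ • v ∈ N) (x : ℝ≥0ˣ) :
    (#{w ∈ N | orbitModulus Δ v w = x⁻¹} : ℝ≥0) = x * #{w ∈ N | orbitModulus Δ v w = x} := by
  have hstab : ∀ g ∈ stabilizer G v, Δ g = 1 := fun g => hΔ.eq_one_of_mem hmeas hne_zero hne_top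
  have hNiff : ∀ g : G, g⁻¹ • v ∈ N ↔ g • v ∈ N := fun g =>
    ⟨fun h => by simpa using hN _ h, hN g⟩
  have hpreimage :
      (fun g : G => g⁻¹ • v) ⁻¹' ({w ∈ N | orbitModulus Δ v w = x⁻¹} : Finset V) =
        (fun g : G => g • v) ⁻¹' ({w ∈ N | orbitModulus Δ v w = x} : Finset V) := by
    ext g
    simp [orbitModulus_smul hstab, hNiff]
  have hmeasure := congrArg μ hpreimage
  rw [measure_inv_smul_preimage hmeas, hΔ.measure_smul_preimage hmeas hstab
    fun w hw => (Finset.mem_filter.1 hw).2, ENNReal.mul_left_inj hne_zero hne_top] at hmeasure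
  rw [mul_comm]
  exact_mod_cast hmeasure

end ModularFunction

theorem modular_function_lower_bound_on_degree_general {G V : Type*} [Group G]
    [TopologicalSpace G] [ContinuousMul G] [MeasurableSpace G] [BorelSpace G]
    (hnc : ¬ CompactSpace G)
    (μ : Measure G) [IsFiniteMeasureOnCompacts μ] [μ.IsOpenPosMeasure] [μ.IsMulRightInvariant]
    (Δ : G →* ℝ≥0ˣ) (hΔ : IsModularFunction μ Δ)
    (Γ : SimpleGraph V) (ρ : G →* Equiv.Perm V) (hCA : IsCayleyAbels Γ ρ)
    (deg : ℕ) (hdeg : ∀ v : V, (Γ.neighborSet v).ncard = deg) :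
    IsGeneratedByRatios Δ.range deg := by
  obtain ⟨hconn, hfin, hadj, htrans, hstab⟩ := hCA
  obtain ⟨v⟩ := hconn.nonempty
  let _ : MulAction G V := MulAction.compHom V ρ
  have : IsPretransitive G V := ⟨htrans⟩
  obtain ⟨hcompact, hopen⟩ : IsCompact (stabilizer G v : Set G) ∧ IsOpen (stabilizer G v : Set G) :=
    hstab v
  have hmeas := hopen.measurableSet
  have hne_zero : μ (stabilizer G v) ≠ 0 := (hopen.measure_pos μ ⟨1, one_mem _⟩).ne'
  have hne_top : μ (stabilizer G v) ≠ ∞ := hcompact.measure_lt_top.ne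
  have hsymm : ∀ g : G, g • v ∈ (hfin v).toFinset → g⁻¹ • v ∈ (hfin v).toFinset := by
    intro g hg
    rw [Set.Finite.mem_toFinset] at hg ⊢
    exact adj_inv_smul_of_adj_smul hadj hg
  have hcard : #(hfin v).toFinset = deg := by rw [← hdeg v, Set.ncard_eq_toFinset_card _ (hfin v)]
  have htwo := two_le_ncard_neighborSet_of_not_compactSpace hnc hconn hfin hdeg hcompact
  have hratios := isGeneratedByRatios_closure_image
    (hΔ.card_orbitModulus_fiber_inv hmeas hne_zero hne_top hsymm) (hcard ▸ htwo)
  rwa [hcard, Set.Finite.coe_toFinset, closure_orbitModulus_neighborSet_eq_range hconn hadj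
    fun g => hΔ.eq_one_of_mem hmeas hne_zero hne_top] at hratios

/-- Let `G` be a non-compact, compactly generated t.d.l.c. group with modular function `Δ`
(taking values in the multiplicative group `ℝ≥0ˣ` of positive reals, characterized by
`μ(g·A) = Δ(g)·μ(A)` for a right Haar measure `μ`), and let `H = im Δ`.  Then for every
Cayley–Abels graph for `G`, of degree `deg`, there are `k ≥ 1` and positive integers
`p₁, …, p_k, q₁, …, q_k` such that the `pᵢ/qᵢ` generate `H` and `Σ (pᵢ + qᵢ) ≤ deg`. -/
theorem modular_function_lower_bound_on_degree {G V : Type*} [Group G] [TopologicalSpace G]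
    [IsTopologicalGroup G] [T2Space G] [TotallyDisconnectedSpace G] [LocallyCompactSpace G]
    [MeasurableSpace G] [BorelSpace G]
    (hnc : ¬ CompactSpace G)
    (hcg : ∃ S : Set G, IsCompact S ∧ Subgroup.closure S = ⊤)
    (μ : Measure G) [IsFiniteMeasureOnCompacts μ] [μ.IsOpenPosMeasure]
    [μ.IsMulRightInvariant]
    (Δ : G →* ℝ≥0ˣ)
    (hΔ : ∀ (g : G) (A : Set G), MeasurableSet A →
      μ ((fun x => g * x) '' A) = ((Δ g : ℝ≥0) : ℝ≥0∞) * μ A)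
    (Γ : SimpleGraph V) (ρ : G →* Equiv.Perm V) (hCA : IsCayleyAbels Γ ρ)
    (deg : ℕ) (hdeg : ∀ v : V, (Γ.neighborSet v).ncard = deg) :
    ∃ (k : ℕ), 1 ≤ k ∧ ∃ p q : Fin k → ℕ,
      (∀ i, 0 < p i) ∧ (∀ i, 0 < q i) ∧
      Subgroup.closure {x : ℝ≥0ˣ | ∃ i : Fin k, (x : ℝ≥0) = (p i : ℝ≥0) / (q i : ℝ≥0)}
        = Δ.range ∧
      ∑ i : Fin k, (p i + q i) ≤ deg := 
  modular_function_lower_bound_on_degree_general hnc μ Δ hΔ Γ ρ hCA deg hdeg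
end

section
/- Let Γ be a locally finite digraph and let G be a group of automorphisms of Γ acting vertex-transitively and transitively on the set of arcs of Γ. Let p be the common out-degree and q the common in-degree of the vertices of Γ, and assume p and q are coprime. Then for every s ≥ 1, G acts transitively on the set of s-arcs of Γ (Γ is highly-arc-transitive). Moreover, for every vertex α, the subdigraph of Γ induced on the set of descendants of α (the vertices reachable from α by directed paths) has an underlying undirected graph that is a tree; equivalently, every descendant of α is reached from α by a unique directed path. -/
/-!
For a directed walk `a₀ → ⋯ → aₛ` let `K` be the pointwise stabilizer of its vertices. By induction
on `s`, `K` has index `p ^ s` in the stabilizer of `a₀` and `q ^ s` in the stabilizer of `aₛ`: since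
`q ^ s` is coprime to `p`, passing from the stabilizer of `aₛ` to `K` does not shrink the orbit of
an out-neighbour of `aₛ`, so a new vertex at the end of the walk costs a factor `p`; dually, a new
vertex at the start costs a factor `q`. Transitivity of `K` on the out-neighbours of `aₛ` makes all
walks from `a₀` of the same length conjugate under `G`.

The index of `K` in the stabilizer of both endpoints divides `p ^ s` and `q ^ s`, so it is `1`:
whatever fixes the endpoints fixes the walk, and conjugacy makes a walk unique given its endpoints
and length. If walks of lengths `m < n` share both endpoints, the two indices `p ^ m` and `p ^ n`
agree, so `p = 1` and one walk is an initial segment of the other.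
-/

open MulAction

section Orbits

variable {G X : Type*} [Group G] [MulAction G X]

theorem relIndex_stabilizer_eq_ncard_orbit (H : Subgroup G) (x : X) :
    (stabilizer G x).relIndex H = (orbit H x).ncard :=
  index_stabilizer H x

theorem orbit_subgroup_mono {H K : Subgroup G} (hKH : K ≤ H) (x : X) : orbit K x ⊆ orbit H x := by
  rintro _ ⟨k, rfl⟩
  exact ⟨⟨k, hKH k.2⟩, rfl⟩

theorem relIndex_stabilizer_inf {H K : Subgroup G} (hKH : K ≤ H) (x : X) :
    (stabilizer G x ⊓ K).relIndex H = (orbit K x).ncard * K.relIndex H := by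
  rw [← Subgroup.relIndex_inf_mul_relIndex, inf_eq_left.2 hKH, relIndex_stabilizer_eq_ncard_orbit]

theorem orbit_eq_orbit_of_coprime {H K : Subgroup G} (hKH : K ≤ H) {x : X}
    (hfin : (orbit H x).Finite) (hcop : (orbit H x).ncard.Coprime (K.relIndex H)) :
    orbit K x = orbit H x := by
  have hsub : orbit K x ⊆ orbit H x := orbit_subgroup_mono hKH x
  have hpos : 0 < (orbit K x).ncard := (Set.ncard_pos (hfin.subset hsub)).2 (nonempty_orbit x)
  have hdvd : (orbit H x).ncard ∣ (orbit K x).ncard * K.relIndex H := by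
    rw [← relIndex_stabilizer_inf hKH, ← relIndex_stabilizer_eq_ncard_orbit]
    exact Subgroup.relIndex_dvd_of_le_left H inf_le_left
  exact Set.eq_of_subset_of_ncard_le hsub
    (Nat.le_of_dvd hpos (hcop.dvd_of_dvd_mul_right hdvd)) hfin

end Orbits

section Digraphs

variable {G V : Type*} [Group G] [MulAction G V] {A : V → V → Prop} {p q : ℕ}

/-- `G` acts on the digraph with arc relation `A` by automorphisms, transitively on arcs. -/
structure IsArcTransitive (G : Type*) {V : Type*} [Group G] [MulAction G V]
    (A : V → V → Prop) : Prop where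
  smul_arc (g : G) {u v : V} : A u v → A (g • u) (g • v)
  exists_smul_eq {u v x y : V} : A u v → A x y → ∃ g : G, g • u = x ∧ g • v = y

/-- Every vertex has exactly `d` out-neighbours, in particular finitely many. The in-degree is
expressed as the out-degree of the reversed digraph `flip A`. -/
def HasOutDegree (A : V → V → Prop) (d : ℕ) : Prop :=
  ∀ v, {w | A v w}.encard = d

theorem HasOutDegree.finite (hp : HasOutDegree A p) (v : V) : {w | A v w}.Finite :=
  Set.finite_of_encard_eq_coe (hp v)

theorem HasOutDegree.ncard_eq (hp : HasOutDegree A p) (v : V) : {w | A v w}.ncard = p := by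
  rw [Set.ncard, hp v, ENat.toNat_natCast]

theorem HasOutDegree.pos (hp : HasOutDegree A p) {u v : V} (huv : A u v) : 0 < p := by
  rw [← hp.ncard_eq u]
  exact (Set.ncard_pos (hp.finite u)).2 ⟨v, huv⟩

theorem HasOutDegree.rightUnique (h : HasOutDegree A 1) : Relator.RightUnique A :=
  fun u _ _ hv hw => Set.encard_le_one_iff.1 (h u).le _ _ hv hw

namespace IsArcTransitive

theorem reverse (hG : IsArcTransitive G A) : IsArcTransitive G (flip A) where
  smul_arc g _ _ huv := hG.smul_arc g huv
  exists_smul_eq huv hxy := (hG.exists_smul_eq huv hxy).imp fun _ => And.symm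

theorem orbit_stabilizer_eq (hG : IsArcTransitive G A) {u v : V} (huv : A u v) :
    orbit (stabilizer G u) v = {w | A u w} := by
  ext w
  constructor
  · rintro ⟨⟨g, hg : g • u = u⟩, rfl⟩
    have hguv := hG.smul_arc g huv
    rwa [hg] at hguv
  · intro huw
    obtain ⟨g, hgu, hgv⟩ := hG.exists_smul_eq huv huw
    exact ⟨⟨g, hgu⟩, hgv⟩

theorem orbit_eq_of_coprime (hG : IsArcTransitive G A) (hp : HasOutDegree A p) {K : Subgroup G}
    {u v : V} (hK : K ≤ stabilizer G u) (hcop : p.Coprime (K.relIndex (stabilizer G u)))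
    (huv : A u v) : orbit K v = {w | A u w} := by
  have horb := hG.orbit_stabilizer_eq huv
  rw [← horb]
  refine orbit_eq_orbit_of_coprime hK ?_ ?_
  · exact horb ▸ hp.finite u
  · rwa [horb, hp.ncard_eq]

end IsArcTransitive

/-- The vertices `a 0, …, a s` form a directed walk of length `s`, possibly with repetitions;
later terms of `a` are ignored. -/
def IsDirectedWalk (A : V → V → Prop) (s : ℕ) (a : ℕ → V) : Prop :=
  ∀ i < s, A (a i) (a (i + 1))

namespace IsDirectedWalk

variable {s : ℕ} {a b : ℕ → V}

theorem mono {m n : ℕ} (ha : IsDirectedWalk A n a) (hmn : m ≤ n) : IsDirectedWalk A m a :=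
  fun i hi => ha i (hi.trans_le hmn)

theorem tail (ha : IsDirectedWalk A (s + 1) a) : IsDirectedWalk A s fun i => a (i + 1) :=
  fun i hi => ha (i + 1) (Nat.succ_lt_succ hi)

theorem eq_of_rightUnique (hA : Relator.RightUnique A) (ha : IsDirectedWalk A s a)
    (hb : IsDirectedWalk A s b) (h0 : a 0 = b 0) : ∀ i ≤ s, a i = b i := by
  intro i hi
  induction i with
  | zero => exact h0
  | succ i ih => exact hA (ha i hi) (ih (Nat.le_of_succ_le hi) ▸ hb i hi)

end IsDirectedWalk

/-- The pointwise stabilizer of the vertices `a 0, …, a s`. -/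
def walkStabilizer (G : Type*) {V : Type*} [Group G] [MulAction G V] (a : ℕ → V) (s : ℕ) :
    Subgroup G :=
  fixingSubgroup G (a '' Set.Iic s)

section WalkStabilizer

theorem mem_walkStabilizer {a : ℕ → V} {s : ℕ} {g : G} :
    g ∈ walkStabilizer G a s ↔ ∀ i ≤ s, g • a i = a i := by
  simp only [walkStabilizer, mem_fixingSubgroup_iff, Set.forall_mem_image, Set.mem_Iic]

variable (a : ℕ → V) (s : ℕ)

theorem walkStabilizer_le_stabilizer {i : ℕ} (hi : i ≤ s) :
    walkStabilizer G a s ≤ stabilizer G (a i) :=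
  fun _ hg => mem_walkStabilizer.1 hg i hi

theorem walkStabilizer_zero : walkStabilizer G a 0 = stabilizer G (a 0) := by
  ext g
  simp only [mem_walkStabilizer, Nat.le_zero, forall_eq, mem_stabilizer_iff]

theorem walkStabilizer_succ :
    walkStabilizer G a (s + 1) = stabilizer G (a (s + 1)) ⊓ walkStabilizer G a s := by
  ext g
  simp only [Subgroup.mem_inf, mem_walkStabilizer, mem_stabilizer_iff, Nat.le_succ_iff, or_imp,
    forall_and, forall_eq, and_comm]

theorem walkStabilizer_succ_eq_inf_tail :
    walkStabilizer G a (s + 1) =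
      stabilizer G (a 0) ⊓ walkStabilizer G (fun i => a (i + 1)) s := by
  ext g
  simp only [Subgroup.mem_inf, mem_walkStabilizer, mem_stabilizer_iff]
  refine ⟨fun h => ⟨h 0 (Nat.zero_le _), fun i hi => h (i + 1) (Nat.succ_le_succ hi)⟩, ?_⟩
  rintro ⟨h0, htail⟩ (_ | i) hi
  · exact h0
  · exact htail i (Nat.le_of_succ_le_succ hi)

end WalkStabilizer

namespace IsArcTransitive

variable (hG : IsArcTransitive G A) (hp : HasOutDegree A p) (hq : HasOutDegree (flip A) q)
  (hpq : p.Coprime q)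
include hG hp hq hpq

theorem relIndex_walkStabilizer {s : ℕ} {a : ℕ → V} (ha : IsDirectedWalk A s a) :
    (walkStabilizer G a s).relIndex (stabilizer G (a 0)) = p ^ s ∧
      (walkStabilizer G a s).relIndex (stabilizer G (a s)) = q ^ s := by
  induction s generalizing a with
  | zero => simp only [walkStabilizer_zero, Subgroup.relIndex_self, pow_zero, and_self]
  | succ s ih =>
    obtain ⟨init_start, init_end⟩ := ih (ha.mono s.le_succ)
    obtain ⟨tail_start, tail_end⟩ := ih ha.tail
    have orbit_last : orbit (walkStabilizer G a s) (a (s + 1)) = {w | A (a s) w} :=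
      hG.orbit_eq_of_coprime hp (walkStabilizer_le_stabilizer a s le_rfl)
        (init_end ▸ hpq.pow_right s) (ha s s.lt_succ_self)
    have orbit_first :
        orbit (walkStabilizer G (fun i => a (i + 1)) s) (a 0) = {w | flip A (a 1) w} :=
      hG.reverse.orbit_eq_of_coprime hq (walkStabilizer_le_stabilizer _ s s.zero_le)
        (tail_start ▸ hpq.symm.pow_right s) (ha 0 s.succ_pos)
    constructor
    · rw [walkStabilizer_succ, relIndex_stabilizer_inf (walkStabilizer_le_stabilizer a s s.zero_le),
        orbit_last, hp.ncard_eq, init_start, pow_succ']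
    · rw [walkStabilizer_succ_eq_inf_tail,
        relIndex_stabilizer_inf (walkStabilizer_le_stabilizer (fun i => a (i + 1)) s le_rfl),
        orbit_first, hq.ncard_eq, tail_end, pow_succ']

theorem orbit_walkStabilizer {s : ℕ} {a : ℕ → V} (ha : IsDirectedWalk A s a) {v : V}
    (hv : A (a s) v) : orbit (walkStabilizer G a s) v = {w | A (a s) w} :=
  hG.orbit_eq_of_coprime hp (walkStabilizer_le_stabilizer a s le_rfl)
    ((hG.relIndex_walkStabilizer hp hq hpq ha).2 ▸ hpq.pow_right s) hv

theorem walkStabilizer_eq_inf_stabilizer {s : ℕ} {a : ℕ → V} (ha : IsDirectedWalk A s a) :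
    walkStabilizer G a s = stabilizer G (a 0) ⊓ stabilizer G (a s) := by
  have hle : walkStabilizer G a s ≤ stabilizer G (a 0) ⊓ stabilizer G (a s) :=
    le_inf (walkStabilizer_le_stabilizer a s s.zero_le) (walkStabilizer_le_stabilizer a s le_rfl)
  obtain ⟨index_start, index_end⟩ := hG.relIndex_walkStabilizer hp hq hpq ha
  rw [← Subgroup.relIndex_mul_relIndex _ _ _ hle inf_le_left] at index_start
  rw [← Subgroup.relIndex_mul_relIndex _ _ _ hle inf_le_right] at index_end
  exact hle.antisymm <| Subgroup.relIndex_eq_one.1 <|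
    Nat.eq_one_of_dvd_coprimes (hpq.pow s s) (Dvd.intro _ index_start)
      (Dvd.intro _ index_end)

theorem exists_smul_walk_eq_of_start_eq {s : ℕ} {a b : ℕ → V} (ha : IsDirectedWalk A s a)
    (hb : IsDirectedWalk A s b) (h0 : a 0 = b 0) : ∃ g : G, ∀ i ≤ s, g • a i = b i := by
  induction s with
  | zero =>
    refine ⟨1, fun i hi => ?_⟩
    rw [Nat.le_zero.1 hi, one_smul, h0]
  | succ s ih =>
    obtain ⟨g, hg⟩ := ih (ha.mono s.le_succ) (hb.mono s.le_succ)
    have hlast : A (b s) (g • a (s + 1)) :=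
      hg s le_rfl ▸ hG.smul_arc g (ha s s.lt_succ_self)
    obtain ⟨⟨k, hk⟩, hkg : k • g • a (s + 1) = b (s + 1)⟩ :
        b (s + 1) ∈ orbit (walkStabilizer G b s) (g • a (s + 1)) := by
      rw [hG.orbit_walkStabilizer hp hq hpq (hb.mono s.le_succ) hlast]
      exact hb s s.lt_succ_self
    refine ⟨k * g, fun i hi => ?_⟩
    rw [mul_smul]
    rcases Nat.le_succ_iff.1 hi with hi | rfl
    · rw [hg i hi, mem_walkStabilizer.1 hk i hi]
    · exact hkg

theorem exists_smul_walk_eq [IsPretransitive G V] {s : ℕ} {a b : ℕ → V}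
    (ha : IsDirectedWalk A s a) (hb : IsDirectedWalk A s b) :
    ∃ g : G, ∀ i ≤ s, g • a i = b i := by
  obtain ⟨h, h0⟩ := MulAction.exists_smul_eq G (a 0) (b 0)
  have hsmul : IsDirectedWalk A s fun i => h • a i := fun i hi => hG.smul_arc h (ha i hi)
  obtain ⟨g, hg⟩ := hG.exists_smul_walk_eq_of_start_eq hp hq hpq hsmul hb h0
  exact ⟨g * h, fun i hi => (mul_smul g h (a i)).trans (hg i hi)⟩

theorem walk_eq_of_endpoints_eq {s : ℕ} {a b : ℕ → V} (ha : IsDirectedWalk A s a)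
    (hb : IsDirectedWalk A s b) (h0 : a 0 = b 0) (hs : a s = b s) : ∀ i ≤ s, a i = b i := by
  obtain ⟨g, hg⟩ := hG.exists_smul_walk_eq_of_start_eq hp hq hpq ha hb h0
  have hmem : g ∈ walkStabilizer G a s := by
    rw [hG.walkStabilizer_eq_inf_stabilizer hp hq hpq ha]
    exact ⟨(hg 0 s.zero_le).trans h0.symm, (hg s le_rfl).trans hs.symm⟩
  exact fun i hi => (mem_walkStabilizer.1 hmem i hi).symm.trans (hg i hi)

theorem outDegree_eq_one_of_length_lt {m n : ℕ} (hmn : m < n) {a b : ℕ → V}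
    (ha : IsDirectedWalk A m a) (hb : IsDirectedWalk A n b) (h0 : a 0 = b 0) (hend : a m = b n) :
    p = 1 := by
  have hpow : p ^ m = p ^ n := by
    rw [← (hG.relIndex_walkStabilizer hp hq hpq ha).1,
      ← (hG.relIndex_walkStabilizer hp hq hpq hb).1,
      hG.walkStabilizer_eq_inf_stabilizer hp hq hpq ha,
      hG.walkStabilizer_eq_inf_stabilizer hp hq hpq hb, h0, hend]
  by_contra hp1
  have hlt : 1 < p := (Nat.succ_le_of_lt (hp.pos (hb 0 hmn.pos))).lt_of_ne' hp1
  exact hmn.ne (Nat.pow_right_injective hlt hpow)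

theorem apply_length_eq_of_length_lt {m n : ℕ} (hmn : m < n) {a b : ℕ → V}
    (ha : IsDirectedWalk A m a) (hb : IsDirectedWalk A n b) (h0 : a 0 = b 0) (hend : a m = b n) :
    b m = b n := by
  obtain rfl := hG.outDegree_eq_one_of_length_lt hp hq hpq hmn ha hb h0 hend
  rw [← ha.eq_of_rightUnique hp.rightUnique (hb.mono hmn.le) h0 m le_rfl, hend]

theorem length_eq_of_injOn {m n : ℕ} {a b : ℕ → V}
    (ha : IsDirectedWalk A m a) (hb : IsDirectedWalk A n b) (ha_inj : Set.InjOn a (Set.Iic m))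
    (hb_inj : Set.InjOn b (Set.Iic n)) (h0 : a 0 = b 0) (hend : a m = b n) : m = n := by
  rcases lt_trichotomy m n with hlt | heq | hgt
  · exact hb_inj hlt.le Set.self_mem_Iic
      (hG.apply_length_eq_of_length_lt hp hq hpq hlt ha hb h0 hend)
  · exact heq
  · exact (ha_inj hgt.le Set.self_mem_Iic
      (hG.apply_length_eq_of_length_lt hp hq hpq hgt hb ha h0.symm hend.symm)).symm

end IsArcTransitive

end Digraphs

/-- Let `Γ` be a locally finite digraph (arc relation `A`) and `G` a group of digraph
automorphisms acting vertex- and arc-transitively.  If the common out-degree `p` and the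
common in-degree `q` are coprime, then `G` acts transitively on `s`-arcs for every `s ≥ 1`
(the digraph is highly-arc-transitive), and every descendant of a vertex `α` is reached
from `α` by a unique directed path (so the subdigraph induced on the descendants of `α`
is a tree). -/
theorem coprime_degrees_highly_arc_transitive {G V : Type*} [Group G]
    (A : V → V → Prop) (hirr : ∀ v, ¬ A v v)
    (hlf : ∀ v : V, {w : V | A v w}.Finite ∧ {w : V | A w v}.Finite)
    (ρ : G →* Equiv.Perm V)
    (hpres : ∀ (g : G) (u v : V), A u v → A (ρ g u) (ρ g v))
    (hvtrans : ∀ u v : V, ∃ g : G, ρ g u = v)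
    (harctrans : ∀ a b c d : V, A a b → A c d → ∃ g : G, ρ g a = c ∧ ρ g b = d)
    (p q : ℕ) (hout : ∀ v : V, {w : V | A v w}.ncard = p)
    (hin : ∀ v : V, {w : V | A w v}.ncard = q)
    (hcop : Nat.Coprime p q) :
    (∀ s : ℕ, 1 ≤ s → ∀ a b : ℕ → V,
      (∀ i < s, A (a i) (a (i + 1))) → (∀ i, i + 2 ≤ s → a i ≠ a (i + 2)) →
      (∀ i < s, A (b i) (b (i + 1))) → (∀ i, i + 2 ≤ s → b i ≠ b (i + 2)) →
      ∃ g : G, ∀ i ≤ s, ρ g (a i) = b i) ∧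
    (∀ (α : V) (m m' : ℕ) (P Q : ℕ → V),
      P 0 = α → Q 0 = α →
      (∀ i < m, A (P i) (P (i + 1))) → (∀ i < m', A (Q i) (Q (i + 1))) →
      (∀ i j, i ≤ m → j ≤ m → P i = P j → i = j) →
      (∀ i j, i ≤ m' → j ≤ m' → Q i = Q j → i = j) →
      P m = Q m' → m = m' ∧ ∀ i ≤ m, P i = Q i) := by
  let _ : MulAction G V := MulAction.compHom V ρ
  have _ : IsPretransitive G V := ⟨hvtrans⟩
  have hG : IsArcTransitive G A := ⟨fun g u v => hpres g u v, fun {u v x y} => harctrans u v x y⟩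
  have hp : HasOutDegree A p := fun v => by rw [← (hlf v).1.cast_ncard_eq, hout v]
  have hq : HasOutDegree (flip A) q := fun v => by
    rw [← hin v]
    exact (hlf v).2.cast_ncard_eq.symm
  refine ⟨fun s _ a b ha _ hb _ => hG.exists_smul_walk_eq hp hq hcop ha hb, ?_⟩
  intro α m m' P Q hP0 hQ0 hP hQ hPinj hQinj hend
  have h0 : P 0 = Q 0 := hP0.trans hQ0.symm
  obtain rfl : m = m' := hG.length_eq_of_injOn hp hq hcop hP hQ
    (fun i hi j hj => hPinj i j hi hj) (fun i hi j hj => hQinj i j hi hj) h0 hend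
  exact ⟨rfl, hG.walk_eq_of_endpoints_eq hp hq hcop hP hQ h0 hend⟩
end
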